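/- arXiv:1104.5295 — 8 statements merged into one kernel-verified Lean document; each statement's English description precedes it below -/
import Mathlib

section
/- Let r > 2. Let (X_i)_{i≥1} be a sequence of random variables on (Ω, 𝒜) that is IID under the upper expectation E̅, with E̅[X₁] = E̅[−X₁] = 0 and E̅[|X₁|^r] < ∞. Then there exists a constant K_r > 0, not depending on n, such that for all n ≥ 1, sup_{m≥0} E̅[|S_{m+n} − S_m|^r] ≤ K_r · n^{r/2}. -/
open MeasureTheory Filter Topology

/-- Upper expectation `E̅[X] = sup_{P ∈ 𝒬} E_P[X]` of a set of probability measures. -/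
noncomputable def upperExp {Ω : Type*} [MeasurableSpace Ω]
    (𝒬 : Set (Measure Ω)) (X : Ω → ℝ) : ℝ :=
  sSup ((fun P : Measure Ω => ∫ ω, X ω ∂P) '' 𝒬)

/-- `E̅[X]` is finite: `X` is integrable under each `P ∈ 𝒬` and the
integrals are bounded above. -/
def HasFiniteUpperExp {Ω : Type*} [MeasurableSpace Ω]
    (𝒬 : Set (Measure Ω)) (X : Ω → ℝ) : Prop :=
  (∀ P ∈ 𝒬, Integrable X P) ∧ BddAbove ((fun P : Measure Ω => ∫ ω, X ω ∂P) '' 𝒬)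

/-- Peng independence of a random variable `Y` from a random vector `X` under
the upper expectation associated with `𝒬`. -/
def PengIndep {Ω : Type*} [MeasurableSpace Ω]
    (𝒬 : Set (Measure Ω)) {d : ℕ} (X : Ω → (Fin d → ℝ)) (Y : Ω → ℝ) : Prop :=
  ∀ φ : (Fin d → ℝ) → ℝ → ℝ,
    Measurable (fun p : (Fin d → ℝ) × ℝ => φ p.1 p.2) →
    HasFiniteUpperExp 𝒬 (fun ω => φ (X ω) (Y ω)) →
    (∀ x, HasFiniteUpperExp 𝒬 (fun ω => φ x (Y ω))) →
    HasFiniteUpperExp 𝒬 (fun ω => upperExp 𝒬 (fun ω' => φ (X ω) (Y ω'))) →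
    upperExp 𝒬 (fun ω => φ (X ω) (Y ω)) =
      upperExp 𝒬 (fun ω => upperExp 𝒬 (fun ω' => φ (X ω) (Y ω')))

/-- A sequence `(X_i)` is IID under the upper expectation: each `X_i` has the
same distribution as `X_0` (tested against measurable functions with finite
expectations) and `X_{i+1}` is Peng-independent of `(X_0, …, X_i)`. -/
def IsIIDUnder {Ω : Type*} [MeasurableSpace Ω]
    (𝒬 : Set (Measure Ω)) (X : ℕ → Ω → ℝ) : Prop :=
  (∀ i, ∀ φ : ℝ → ℝ, Measurable φ →
      HasFiniteUpperExp 𝒬 (fun ω => φ (X i ω)) →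
      HasFiniteUpperExp 𝒬 (fun ω => φ (X 0 ω)) →
      upperExp 𝒬 (fun ω => φ (X i ω)) = upperExp 𝒬 (fun ω => φ (X 0 ω))) ∧
  (∀ i : ℕ, PengIndep 𝒬 (fun ω (j : Fin (i + 1)) => X (j : ℕ) ω) (X (i + 1)))

/-- Partial sum `S_n = X_0 + ⋯ + X_{n-1}` (the first `n` variables). -/
def partialSum {Ω : Type*} (X : ℕ → Ω → ℝ) (n : ℕ) (ω : Ω) : ℝ :=
  ∑ i ∈ Finset.range n, X i ω

/-- tangent line inequality for `x ^ p` -/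
lemma mb_tangent {p a b : ℝ} (hp : 1 ≤ p) (ha : 0 < a) (hb : 0 ≤ b) :
    a ^ p + p * a ^ (p - 1) * (b - a) ≤ b ^ p := by
  have h := one_add_mul_self_le_rpow_one_add (s := b / a - 1) (p := p)
    (by have : 0 ≤ b / a := by positivity
        linarith) hp
  have e : 1 + (b / a - 1) = b / a := by ring
  rw [e, Real.div_rpow hb ha.le, le_div_iff₀ (Real.rpow_pos_of_pos ha p)] at h
  have e2 : a ^ p = a ^ (p - 1) * a := by
    rw [Real.rpow_sub_one ha.ne']; field_simp
  refine le_trans (le_of_eq ?_) h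
  rw [e2]; field_simp

lemma mb_tangent' {p a b : ℝ} (hp : 1 < p) (ha : 0 ≤ a) (hb : 0 ≤ b) :
    a ^ p + p * a ^ (p - 1) * (b - a) ≤ b ^ p := by
  rcases ha.eq_or_lt with rfl | ha
  · rw [Real.zero_rpow (by linarith), Real.zero_rpow (by linarith)]
    have := Real.rpow_nonneg hb p
    simpa using this
  · exact mb_tangent hp.le ha hb

lemma mb_young {a b p q : ℝ} (ha : 0 ≤ a) (hb : 0 ≤ b) (hp : 0 ≤ p) (hq : 0 ≤ q)
    (h : 0 < p + q) : a ^ p * b ^ q ≤ a ^ (p + q) + b ^ (p + q) := by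
  have h1 := Real.rpow_nonneg ha (p + q)
  have h2 := Real.rpow_nonneg hb (p + q)
  rcases le_total a b with hab | hab
  · have : a ^ p * b ^ q ≤ b ^ p * b ^ q := by gcongr
    rw [← Real.rpow_add' hb h.ne'] at this
    linarith
  · have : a ^ p * b ^ q ≤ a ^ p * a ^ q := by gcongr
    rw [← Real.rpow_add' ha h.ne'] at this
    linarith

lemma mb_add_rpow {a b p : ℝ} (ha : 0 ≤ a) (hb : 0 ≤ b) (hp : 0 ≤ p) :
    (a + b) ^ p ≤ 2 ^ p * (a ^ p + b ^ p) := by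
  have h1 := Real.rpow_nonneg ha p
  have h2 := Real.rpow_nonneg hb p
  have h3 := Real.rpow_nonneg (show (0:ℝ) ≤ 2 by norm_num) p
  rcases le_total a b with hab | hab
  · have : (a + b) ^ p ≤ (2 * b) ^ p := by gcongr; linarith
    rw [Real.mul_rpow (by norm_num) hb] at this
    nlinarith
  · have : (a + b) ^ p ≤ (2 * a) ^ p := by gcongr; linarith
    rw [Real.mul_rpow (by norm_num) ha] at this
    nlinarith

lemma mb_mid {r s y : ℝ} (hr : 2 < r) (hs : 0 ≤ s) (hst : 0 ≤ s + y) :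
    y * ((s + y) ^ (r - 1) - s ^ (r - 1)) ≤ (r - 1) * (s + |y|) ^ (r - 2) * y ^ 2 := by
  have e : r - 1 - 1 = r - 2 := by ring
  rcases le_total 0 y with hy | hy
  · have h := mb_tangent' (p := r - 1) (by linarith) hst hs
    rw [e] at h
    rw [abs_of_nonneg hy]
    have : (s + y) ^ (r - 1) - s ^ (r - 1) ≤ (r - 1) * (s + y) ^ (r - 2) * y := by linarith
    calc _ ≤ y * ((r - 1) * (s + y) ^ (r - 2) * y) := by gcongr
      _ = _ := by ring
  · have h := mb_tangent' (p := r - 1) (by linarith) hs hst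
    rw [e] at h
    have h2 : s ^ (r - 2) ≤ (s + |y|) ^ (r - 2) := by
      apply Real.rpow_le_rpow hs _ (by linarith)
      linarith [abs_nonneg y]
    have h3 : s ^ (r - 1) - (s + y) ^ (r - 1) ≤ (r - 1) * (s + |y|) ^ (r - 2) * (-y) := by
      have : (r - 1) * s ^ (r - 2) * (-y) ≤ (r - 1) * (s + |y|) ^ (r - 2) * (-y) := by
        have : 0 ≤ -y := by linarith
        have : 0 ≤ r - 1 := by linarith
        gcongr
      linarith
    have h4 : 0 ≤ -y := by linarith
    nlinarith

lemma mb_pow2 {r y : ℝ} (hr : 2 < r) : |y| ^ (r - 2) * y ^ 2 = |y| ^ r := by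
  rw [← sq_abs, ← Real.rpow_natCast (|y|) 2, ← Real.rpow_add' (abs_nonneg y)]
  · norm_num
  · norm_num; linarith

lemma mb_ineq_pos {r s y : ℝ} (hr : 2 < r) (hs : 0 ≤ s) :
    |s + y| ^ r ≤ s ^ r + r * (s ^ (r - 1) * y) +
      (2 ^ r * r ^ 2 + r) * (s ^ (r - 2) * y ^ 2 + |y| ^ r) := by
  have hA := Real.rpow_nonneg hs (r - 2)
  have hB := Real.rpow_nonneg (abs_nonneg y) r
  have hsr := Real.rpow_nonneg hs r
  have h2r : (1:ℝ) ≤ 2 ^ r := Real.one_le_rpow (by norm_num) (by linarith)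
  rcases le_total 0 (s + y) with h | h
  · rw [abs_of_nonneg h]
    have h1 := mb_tangent' (p := r) (by linarith) h hs
    have h2 := mb_mid hr hs h
    have h3 := mb_add_rpow (p := r - 2) hs (abs_nonneg y) (by linarith)
    have h4 : (s + |y|) ^ (r - 2) * y ^ 2 ≤ 2 ^ r * (s ^ (r - 2) * y ^ 2 + |y| ^ r) := by
      rw [← mb_pow2 hr (y := y), ← add_mul, ← mul_assoc]
      gcongr
      refine h3.trans ?_
      have := Real.rpow_nonneg (abs_nonneg y) (r - 2)
      gcongr
      · norm_num
      · linarith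
    set D := s ^ (r - 2) * y ^ 2 + |y| ^ r
    have hD : 0 ≤ D := by positivity
    have h5 : r * (y * ((s + y) ^ (r - 1) - s ^ (r - 1))) ≤ r * ((r - 1) * (2 ^ r * D)) := by
      have : 0 ≤ r - 1 := by linarith
      have : 0 ≤ r := by linarith
      refine mul_le_mul_of_nonneg_left (h2.trans ?_) this
      rw [mul_assoc]
      gcongr
    have h6 : 0 ≤ r * (2 ^ r * D) + r * D := by positivity
    nlinarith
  · have hy : s ≤ |y| := by rw [abs_of_nonpos] <;> linarith
    have h1 : |s + y| ^ r ≤ |y| ^ r := by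
      apply Real.rpow_le_rpow (abs_nonneg _) _ (by linarith)
      rw [abs_of_nonpos h, abs_of_nonpos] <;> linarith
    have h2 : s ^ (r - 1) * |y| ≤ |y| ^ r := by
      have h0 : |y| ^ r = |y| ^ (r - 1) * |y| := by
        conv_rhs => rw [← Real.rpow_one |y|, ← Real.rpow_mul (abs_nonneg y), one_mul]
        rw [← Real.rpow_add' (abs_nonneg y) (by linarith)]; norm_num
      rw [h0]
      gcongr
      linarith
    have h3 : s ^ (r - 1) * (-|y|) ≤ s ^ (r - 1) * y := by
      gcongr
      exact neg_abs_le y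
    have h4 : -(r * |y| ^ r) ≤ r * (s ^ (r - 1) * y) := by nlinarith
    have h5 : 0 ≤ s ^ (r - 2) * y ^ 2 := by positivity
    have h6 : |y| ^ r ≤ 2 ^ r * r ^ 2 * |y| ^ r := by
      have : 1 ≤ 2 ^ r * r ^ 2 := by nlinarith
      nlinarith
    have h7 : 0 ≤ (2 ^ r * r ^ 2 + r) * (s ^ (r - 2) * y ^ 2) := by positivity
    nlinarith

lemma mb_ineq {r : ℝ} (hr : 2 < r) (s y : ℝ) :
    |s + y| ^ r ≤ |s| ^ r + r * (max s 0 ^ (r - 1) * y) + r * (max (-s) 0 ^ (r - 1) * (-y)) +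
      (2 ^ r * r ^ 2 + r) * (|s| ^ (r - 2) * y ^ 2 + |y| ^ r) := by
  have hz : (0:ℝ) ^ (r - 1) = 0 := Real.zero_rpow (by linarith)
  rcases le_total 0 s with hs | hs
  · rw [max_eq_left hs, max_eq_right (by linarith : -s ≤ 0), hz, abs_of_nonneg hs]
    have := mb_ineq_pos (y := y) hr hs
    linarith
  · rw [max_eq_right hs, max_eq_left (by linarith : 0 ≤ -s), hz, abs_of_nonpos hs]
    have := mb_ineq_pos (y := -y) hr (by linarith : 0 ≤ -s)
    have e : |-s + -y| = |s + y| := by rw [← neg_add, abs_neg]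
    rw [e, abs_neg, neg_sq] at this
    linarith

lemma mb_cut {r l t : ℝ} (hr : 2 < r) (hl : 0 < l) (ht : 0 ≤ t) :
    t ^ (r - 2) ≤ t ^ r / l ^ 2 + l ^ (r - 2) := by
  have h1 := Real.rpow_nonneg ht r
  have h2 := Real.rpow_nonneg hl.le (r - 2)
  rcases le_total t l with h | h
  · have : t ^ (r - 2) ≤ l ^ (r - 2) := Real.rpow_le_rpow ht h (by linarith)
    have : 0 ≤ t ^ r / l ^ 2 := by positivity
    linarith
  · have e : t ^ r = t ^ (r - 2) * t ^ 2 := by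
      have := mb_pow2 (y := t) hr
      rw [abs_of_nonneg ht] at this
      exact this.symm
    have : t ^ (r - 2) ≤ t ^ r / l ^ 2 := by
      rw [le_div_iff₀ (by positivity), e]
      have := Real.rpow_nonneg ht (r - 2)
      gcongr
    linarith

lemma mb_num {r L N A C v M : ℝ} (hr : 2 < r) (hL : 1 ≤ L) (hN : 1 ≤ N) (hC : 0 ≤ C)
    (hv : 0 ≤ v) (hM : 0 ≤ M) (hLC : 2 * C * v + C * M ≤ L ^ 2)
    (hA : A ≤ L ^ r * N ^ (r / 2)) :
    A + C * (v * (A / (L * N ^ (1 / 2 : ℝ)) ^ 2 + (L * N ^ (1 / 2 : ℝ)) ^ (r - 2)) + M)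
      ≤ L ^ r * (N + 1) ^ (r / 2) := by
  have hN0 : 0 < N := by linarith
  have hL0 : 0 < L := by linarith
  set B := L ^ (r - 2) * N ^ (r / 2 - 1) with hB
  have hB1 : 1 ≤ B := by
    have h1 : 1 ≤ L ^ (r - 2) := Real.one_le_rpow hL (by linarith)
    have h2 : 1 ≤ N ^ (r / 2 - 1) := Real.one_le_rpow hN (by linarith)
    nlinarith
  have eL : L ^ r = L ^ (r - 2) * L ^ 2 := by
    have := mb_pow2 (y := L) hr
    rw [abs_of_nonneg hL0.le] at this
    exact this.symm
  have eN : N ^ (r / 2) = N ^ (r / 2 - 1) * N := by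
    rw [Real.rpow_sub_one hN0.ne']; field_simp
  have e1 : L ^ r * N ^ (r / 2) = B * L ^ 2 * N := by rw [eL, eN, hB]; ring
  have e2 : (L * N ^ (1 / 2 : ℝ)) ^ (r - 2) = B := by
    rw [Real.mul_rpow hL0.le (by positivity), ← Real.rpow_mul hN0.le, hB]
    congr 2; ring
  have e3 : (L * N ^ (1 / 2 : ℝ)) ^ 2 = L ^ 2 * N := by
    rw [mul_pow, ← Real.rpow_natCast (N ^ (1 / 2 : ℝ)) 2, ← Real.rpow_mul hN0.le]
    norm_num
  have h1 : A / (L * N ^ (1 / 2 : ℝ)) ^ 2 ≤ B := by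
    rw [e3, div_le_iff₀ (by positivity)]
    linarith
  have h2 := mb_tangent (p := r / 2) (a := N) (b := N + 1) (by linarith) hN0 (by linarith)
  have h3 : B * L ^ 2 * N + B * L ^ 2 ≤ L ^ r * (N + 1) ^ (r / 2) := by
    have h4 : N ^ (r / 2) + N ^ (r / 2 - 1) ≤ (N + 1) ^ (r / 2) := by
      have := Real.rpow_pos_of_pos hN0 (r / 2 - 1)
      nlinarith
    have h5 : L ^ r * (N ^ (r / 2) + N ^ (r / 2 - 1)) ≤ L ^ r * (N + 1) ^ (r / 2) := by gcongr
    refine le_trans (le_of_eq ?_) h5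
    rw [mul_add, e1, eL, hB]; ring
  rw [e2]
  have h6 : C * (v * (A / (L * N ^ (1 / 2 : ℝ)) ^ 2 + B) + M) ≤ C * (v * (B + B) + M * B) := by
    gcongr
    nlinarith
  have h7 : C * (v * (B + B) + M * B) ≤ B * L ^ 2 := by nlinarith
  linarith

section
variable {Ω : Type*} [MeasurableSpace Ω] {𝒬 : Set (Measure Ω)}

lemma mb_le {Z : Ω → ℝ} (h : HasFiniteUpperExp 𝒬 Z) {P : Measure Ω} (hP : P ∈ 𝒬) :
    ∫ ω, Z ω ∂P ≤ upperExp 𝒬 Z := le_csSup h.2 ⟨P, hP, rfl⟩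

lemma mb_upper_le (h𝒬 : 𝒬.Nonempty) {Z : Ω → ℝ} {c : ℝ} (h : ∀ P ∈ 𝒬, ∫ ω, Z ω ∂P ≤ c) :
    upperExp 𝒬 Z ≤ c := by
  apply csSup_le (h𝒬.image _)
  rintro _ ⟨P, hP, rfl⟩
  exact h P hP

lemma mb_fin_of_le {Y Z : Ω → ℝ} (hY : HasFiniteUpperExp 𝒬 Y) (hZ : Measurable Z)
    (h : ∀ ω, |Z ω| ≤ Y ω) : HasFiniteUpperExp 𝒬 Z := by
  have hi : ∀ P ∈ 𝒬, Integrable Z P := fun P hP =>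
    (hY.1 P hP).mono' hZ.aestronglyMeasurable (Eventually.of_forall h)
  refine ⟨hi, upperExp 𝒬 Y, ?_⟩
  rintro _ ⟨P, hP, rfl⟩
  exact (integral_mono (hi P hP) (hY.1 P hP) fun ω => (le_abs_self _).trans (h ω)).trans
    (mb_le hY hP)

lemma mb_fin_add {Y Z : Ω → ℝ} (hY : HasFiniteUpperExp 𝒬 Y) (hZ : HasFiniteUpperExp 𝒬 Z) :
    HasFiniteUpperExp 𝒬 (fun ω => Y ω + Z ω) := by
  refine ⟨fun P hP => (hY.1 P hP).add (hZ.1 P hP), upperExp 𝒬 Y + upperExp 𝒬 Z, ?_⟩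
  rintro _ ⟨P, hP, rfl⟩
  simp only
  rw [integral_add (hY.1 P hP) (hZ.1 P hP)]
  exact add_le_add (mb_le hY hP) (mb_le hZ hP)

lemma mb_fin_mul {Y : Ω → ℝ} (hY : HasFiniteUpperExp 𝒬 Y) {c : ℝ} (hc : 0 ≤ c) :
    HasFiniteUpperExp 𝒬 (fun ω => c * Y ω) := by
  refine ⟨fun P hP => (hY.1 P hP).const_mul c, c * upperExp 𝒬 Y, ?_⟩
  rintro _ ⟨P, hP, rfl⟩
  simp only
  rw [integral_const_mul]
  exact mul_le_mul_of_nonneg_left (mb_le hY hP) hc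

lemma mb_fin_const (hprob : ∀ P ∈ 𝒬, IsProbabilityMeasure P) (c : ℝ) :
    HasFiniteUpperExp 𝒬 (fun _ => c) := by
  refine ⟨fun P hP => ?_, c, ?_⟩
  · have := hprob P hP
    exact integrable_const c
  · rintro _ ⟨P, hP, rfl⟩
    have := hprob P hP
    simp

lemma mb_upper_mul_zero {Y : Ω → ℝ} {c : ℝ} (hc : 0 ≤ c) (h : upperExp 𝒬 Y = 0) :
    upperExp 𝒬 (fun ω => c * Y ω) = 0 := by
  unfold upperExp at *
  rw [sSup_image'] at *
  simp only [integral_const_mul]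
  rw [← Real.mul_iSup_of_nonneg hc, h, mul_zero]

lemma mb_upper_sub (h𝒬 : 𝒬.Nonempty) (hprob : ∀ P ∈ 𝒬, IsProbabilityMeasure P)
    {Y : Ω → ℝ} (hY : HasFiniteUpperExp 𝒬 Y) :
    upperExp 𝒬 (fun ω => Y ω - upperExp 𝒬 Y) = 0 := by
  have key : ∀ P ∈ 𝒬, ∫ ω, (Y ω - upperExp 𝒬 Y) ∂P = ∫ ω, Y ω ∂P - upperExp 𝒬 Y := by
    intro P hP
    have := hprob P hP
    rw [integral_sub (hY.1 P hP) (integrable_const _)]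
    simp
  apply le_antisymm
  · apply mb_upper_le h𝒬
    intro P hP
    rw [key P hP]
    linarith [mb_le hY hP]
  · have hb : HasFiniteUpperExp 𝒬 (fun ω => Y ω - upperExp 𝒬 Y) := by
      simpa [sub_eq_add_neg] using mb_fin_add hY (mb_fin_const hprob (-upperExp 𝒬 Y))
    have : upperExp 𝒬 Y ≤ upperExp 𝒬 Y + upperExp 𝒬 (fun ω => Y ω - upperExp 𝒬 Y) := by
      conv_lhs => rw [upperExp]
      apply csSup_le (h𝒬.image _)
      rintro _ ⟨P, hP, rfl⟩
      have := mb_le hb hP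
      rw [key P hP] at this
      simp only
      linarith
    linarith

/-- centered factor gives nonpositive expectations -/
lemma mb_peng (hprob : ∀ P ∈ 𝒬, IsProbabilityMeasure P) {d : ℕ} {V : Ω → (Fin d → ℝ)}
    {Y : Ω → ℝ} (hind : PengIndep 𝒬 V Y) {f : (Fin d → ℝ) → ℝ} {q : ℝ → ℝ}
    (hf : Measurable f) (hf0 : ∀ x, 0 ≤ f x) (hq : Measurable q)
    (hqf : HasFiniteUpperExp 𝒬 (fun ω => q (Y ω))) (hq0 : upperExp 𝒬 (fun ω => q (Y ω)) = 0)
    (hfin : HasFiniteUpperExp 𝒬 (fun ω => f (V ω) * q (Y ω))) :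
    ∀ P ∈ 𝒬, ∫ ω, f (V ω) * q (Y ω) ∂P ≤ 0 := by
  intro P hP
  have hz : ∀ x, upperExp 𝒬 (fun ω' => f x * q (Y ω')) = 0 :=
    fun x => mb_upper_mul_zero (hf0 x) hq0
  have h := hind (fun x y => f x * q y) (by fun_prop) hfin
    (fun x => mb_fin_mul hqf (hf0 x)) (by simp only [hz]; exact mb_fin_const hprob 0)
  simp only [hz] at h
  refine (mb_le hfin hP).trans (h.le.trans ?_)
  apply mb_upper_le ⟨P, hP⟩
  intro P hP
  simp

end

/-- **Theorem 3.1** (moment bound). If `(X_i)` is IID under `E̅`, centered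
(`E̅[X_1] = E̅[-X_1] = 0`), and `E̅[|X_1|^r] < ∞` for some `r > 2`, then there is
a constant `K_r > 0`, not depending on `n`, such that
`sup_{m ≥ 0} E̅[|S_{m+n} - S_m|^r] ≤ K_r n^{r/2}` for all `n ≥ 1`. -/
theorem moment_bound_IID {Ω : Type*} [MeasurableSpace Ω]
    (𝒬 : Set (Measure Ω)) (h𝒬 : 𝒬.Nonempty)
    (hprob : ∀ P ∈ 𝒬, IsProbabilityMeasure P)
    (X : ℕ → Ω → ℝ) (hmeas : ∀ i, Measurable (X i))
    (hiid : IsIIDUnder 𝒬 X)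
    (r : ℝ) (hr : 2 < r)
    (hmean : upperExp 𝒬 (X 0) = 0)
    (hmean' : upperExp 𝒬 (fun ω => -X 0 ω) = 0)
    (hmom : HasFiniteUpperExp 𝒬 (fun ω => |X 0 ω| ^ r))
    (hfin : ∀ m n : ℕ, HasFiniteUpperExp 𝒬
      (fun ω => |partialSum X (m + n) ω - partialSum X m ω| ^ r)) :
    ∃ K : ℝ, 0 < K ∧ ∀ n : ℕ, 1 ≤ n → ∀ m : ℕ,
      upperExp 𝒬 (fun ω => |partialSum X (m + n) ω - partialSum X m ω| ^ r)
        ≤ K * (n : ℝ) ^ (r / 2) := by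
  have hX1 : ∀ k, HasFiniteUpperExp 𝒬 (fun ω => |X k ω| ^ r) := by
    intro k
    have := hfin k 1
    simpa [partialSum, Finset.sum_range_succ] using this
  have hone : ∀ k, HasFiniteUpperExp 𝒬 (fun ω => 1 + |X k ω| ^ r) := fun k =>
    mb_fin_add (mb_fin_const hprob 1) (hX1 k)
  have hb1 : ∀ t : ℝ, |t| ≤ 1 + |t| ^ r := by
    intro t
    have := mb_young (a := 1) (b := |t|) (p := r - 1) (q := 1) (by norm_num) (abs_nonneg t)
      (by linarith) (by norm_num) (by linarith)
    simpa using this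
  have hb2 : ∀ t : ℝ, t ^ 2 ≤ 1 + |t| ^ r := by
    intro t
    have := mb_young (a := 1) (b := |t|) (p := r - 2) (q := 2) (by norm_num) (abs_nonneg t)
      (by linarith) (by norm_num) (by linarith)
    simpa using this
  have hXi : ∀ k, HasFiniteUpperExp 𝒬 (X k) := fun k =>
    mb_fin_of_le (hone k) (hmeas k) fun ω => hb1 _
  have hXn : ∀ k, HasFiniteUpperExp 𝒬 (fun ω => - X k ω) := fun k =>
    mb_fin_of_le (hone k) (hmeas k).neg fun ω => by rw [abs_neg]; exact hb1 _
  have hX2 : ∀ k, HasFiniteUpperExp 𝒬 (fun ω => X k ω ^ 2) := fun k =>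
    mb_fin_of_le (hone k) ((hmeas k).pow_const 2) fun ω => by
      rw [abs_of_nonneg (sq_nonneg _)]; exact hb2 _
  set v := upperExp 𝒬 (fun ω => X 0 ω ^ 2) with hv
  set M := upperExp 𝒬 (fun ω => |X 0 ω| ^ r) with hM
  have hX2v : ∀ k, HasFiniteUpperExp 𝒬 (fun ω => X k ω ^ 2 - v) := fun k => by
    simpa [sub_eq_add_neg] using mb_fin_add (hX2 k) (mb_fin_const hprob (-v))
  have hm1 : ∀ k, upperExp 𝒬 (fun ω => X k ω) = 0 := fun k =>
    (hiid.1 k (fun y => y) measurable_id (hXi k) (hXi 0)).trans hmean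
  have hm2 : ∀ k, upperExp 𝒬 (fun ω => - X k ω) = 0 := fun k =>
    (hiid.1 k (fun y => -y) measurable_neg (hXn k) (hXn 0)).trans hmean'
  have hm3 : ∀ k, upperExp 𝒬 (fun ω => X k ω ^ 2 - v) = 0 := fun k =>
    (hiid.1 k (fun y => y ^ 2 - v) (by fun_prop) (hX2v k) (hX2v 0)).trans
      (mb_upper_sub h𝒬 hprob (hX2 0))
  have hm4 : ∀ k, upperExp 𝒬 (fun ω => |X k ω| ^ r) = M := fun k =>
    hiid.1 k (fun y => |y| ^ r) (by fun_prop) (hX1 k) (hX1 0)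
  obtain ⟨P₀, hP₀⟩ := h𝒬
  have hv0 : 0 ≤ v := (integral_nonneg fun ω => sq_nonneg _).trans (mb_le (hX2 0) hP₀)
  have hM0 : 0 ≤ M :=
    (integral_nonneg fun ω => Real.rpow_nonneg (abs_nonneg _) _).trans (mb_le (hX1 0) hP₀)
  set C : ℝ := 2 ^ r * r ^ 2 + r with hC
  have hC1 : 1 ≤ C := by
    have : (0:ℝ) ≤ 2 ^ r * r ^ 2 := by positivity
    linarith
  set L : ℝ := 1 + 2 * C * v + C * M with hL
  have hCv : 0 ≤ C * v := by positivity
  have hCM : M ≤ C * M := by nlinarith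
  have hL1 : 1 ≤ L := by linarith
  have hLL : L ≤ L ^ 2 := by nlinarith
  refine ⟨L ^ r, by positivity, ?_⟩
  intro n hn m
  induction n, hn using Nat.le_induction with
  | base =>
    have e : (fun ω => |partialSum X (m + 1) ω - partialSum X m ω| ^ r)
        = fun ω => |X m ω| ^ r := by
      funext ω; simp [partialSum, Finset.sum_range_succ]
    rw [e, hm4]
    have : L ^ (2:ℝ) ≤ L ^ r := Real.rpow_le_rpow_of_exponent_le hL1 hr.le
    rw [Real.rpow_two] at this
    simp only [Nat.cast_one, Real.one_rpow, mul_one]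
    linarith
  | succ n hn ih =>
    have hN : (1:ℝ) ≤ n := by exact_mod_cast hn
    set T : Ω → ℝ := fun ω => partialSum X (m + n) ω - partialSum X m ω with hT
    set A := upperExp 𝒬 (fun ω => |T ω| ^ r) with hA
    have hTf : HasFiniteUpperExp 𝒬 (fun ω => |T ω| ^ r) := hfin m n
    have hTm : Measurable T := by
      simp only [hT, partialSum]
      fun_prop
    have hYm := hmeas (m + n)
    have e : (fun ω => |partialSum X (m + (n + 1)) ω - partialSum X m ω| ^ r)
        = fun ω => |T ω + X (m + n) ω| ^ r := by
      funext ω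
      have : partialSum X (m + (n + 1)) ω = partialSum X (m + n) ω + X (m + n) ω := by
        rw [← add_assoc]; simp [partialSum, Finset.sum_range_succ]
      rw [this]; congr 2; simp only [hT]; ring
    have hTY : HasFiniteUpperExp 𝒬 (fun ω => |T ω + X (m + n) ω| ^ r) := e ▸ hfin m (n + 1)
    rw [e]
    -- the vector of the past
    obtain ⟨i, hi⟩ : ∃ i, m + n = i + 1 := ⟨m + n - 1, by omega⟩
    set V : Ω → (Fin (i + 1) → ℝ) := fun ω j => X (j : ℕ) ω with hV
    have hind : PengIndep 𝒬 V (X (m + n)) := by rw [hi]; exact hiid.2 i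
    obtain ⟨s, hsm, hs⟩ : ∃ s : (Fin (i + 1) → ℝ) → ℝ, Measurable s ∧ ∀ ω, s (V ω) = T ω := by
      refine ⟨fun x => ∑ j, x j - ∑ j ∈ Finset.univ.filter (fun j : Fin (i + 1) => (j : ℕ) < m), x j,
        by fun_prop, fun ω => ?_⟩
      simp only [hV, hT, partialSum]
      congr 1
      · rw [hi, Finset.sum_range]
      · symm
        apply Finset.sum_bij' (fun k hk => (⟨k, by
            have := Finset.mem_range.1 hk; omega⟩ : Fin (i + 1))) (fun j _ => (j : ℕ)) <;> simp
    have hsum : HasFiniteUpperExp 𝒬 (fun ω => |T ω| ^ r + |X (m + n) ω| ^ r) :=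
      mb_fin_add hTf (hX1 _)
    have hyr : ∀ a b p q : ℝ, 0 ≤ a → 0 ≤ b → 0 ≤ p → 0 ≤ q → p + q = r →
        a ^ p * b ^ q ≤ a ^ r + b ^ r := by
      intro a b p q ha hb hp hq h
      have := mb_young ha hb hp hq (by linarith)
      rwa [h] at this
    have hmax : ∀ t : ℝ, max t 0 ^ (r - 1) ≤ |t| ^ (r - 1) := by
      intro t
      apply Real.rpow_le_rpow (le_max_right _ _) (max_le (le_abs_self t) (abs_nonneg t))
      linarith
    have hlin : ∀ t y : ℝ, |max t 0 ^ (r - 1) * y| ≤ |t| ^ r + |y| ^ r := by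
      intro t y
      have h0 : 0 ≤ max t 0 ^ (r - 1) := Real.rpow_nonneg (le_max_right _ _) _
      rw [abs_mul, abs_of_nonneg h0]
      have := hyr |t| |y| (r - 1) 1 (abs_nonneg t) (abs_nonneg y) (by linarith) (by norm_num)
        (by ring)
      rw [Real.rpow_one] at this
      exact (mul_le_mul_of_nonneg_right (hmax t) (abs_nonneg y)).trans this
    have f1 : HasFiniteUpperExp 𝒬 (fun ω => max (T ω) 0 ^ (r - 1) * X (m + n) ω) :=
      mb_fin_of_le hsum (by fun_prop) fun ω => hlin _ _
    have f2 : HasFiniteUpperExp 𝒬 (fun ω => max (-T ω) 0 ^ (r - 1) * (-X (m + n) ω)) :=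
      mb_fin_of_le hsum (by fun_prop) fun ω => by
        have := hlin (-T ω) (-X (m + n) ω)
        rwa [abs_neg (T ω), abs_neg (X (m + n) ω)] at this
    have f4 : HasFiniteUpperExp 𝒬 (fun ω => |T ω| ^ (r - 2)) :=
      mb_fin_of_le (mb_fin_add hTf (mb_fin_const hprob 1)) (by fun_prop) fun ω => by
        rw [abs_of_nonneg (Real.rpow_nonneg (abs_nonneg _) _)]
        have := mb_cut (l := 1) hr one_pos (abs_nonneg (T ω))
        simpa using this
    have f3 : HasFiniteUpperExp 𝒬 (fun ω => |T ω| ^ (r - 2) * (X (m + n) ω ^ 2 - v)) := by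
      refine mb_fin_of_le (mb_fin_add hsum (mb_fin_mul f4 hv0)) (by fun_prop) fun ω => ?_
      have h0 := Real.rpow_nonneg (abs_nonneg (T ω)) (r - 2)
      rw [abs_mul, abs_of_nonneg h0]
      have h1 := hyr |T ω| |X (m + n) ω| (r - 2) 2 (abs_nonneg _) (abs_nonneg _) (by linarith)
        (by norm_num) (by ring)
      rw [Real.rpow_two, sq_abs] at h1
      have h2 : |X (m + n) ω ^ 2 - v| ≤ X (m + n) ω ^ 2 + v := by
        rw [abs_le]; constructor <;> nlinarith [sq_nonneg (X (m + n) ω)]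
      calc _ ≤ |T ω| ^ (r - 2) * (X (m + n) ω ^ 2 + v) := by gcongr
        _ ≤ _ := by linarith
    have g1 := mb_peng hprob hind (f := fun x => max (s x) 0 ^ (r - 1)) (q := fun y => y)
      (by fun_prop) (fun x => Real.rpow_nonneg (le_max_right _ _) _) measurable_id
      (hXi _) (hm1 _) (by simpa only [hs] using f1)
    have g2 := mb_peng hprob hind (f := fun x => max (-s x) 0 ^ (r - 1)) (q := fun y => -y)
      (by fun_prop) (fun x => Real.rpow_nonneg (le_max_right _ _) _) measurable_neg
      (hXn _) (hm2 _) (by simpa only [hs] using f2)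
    have g3 := mb_peng hprob hind (f := fun x => |s x| ^ (r - 2)) (q := fun y => y ^ 2 - v)
      (by fun_prop) (fun x => Real.rpow_nonneg (abs_nonneg _) _) (by fun_prop)
      (hX2v _) (hm3 _) (by simpa only [hs] using f3)
    simp only [hs] at g1 g2 g3
    refine le_trans (mb_upper_le ⟨P₀, hP₀⟩ (c := A + C * (v * (A / (L * (n:ℝ) ^ (1 / 2 : ℝ)) ^ 2
      + (L * (n:ℝ) ^ (1 / 2 : ℝ)) ^ (r - 2)) + M)) ?_) ?_
    · intro P hP
      have := hprob P hP
      set l := L * (n:ℝ) ^ (1 / 2 : ℝ) with hl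
      have hl0 : 0 < l := by
        have : (0:ℝ) < n := by linarith
        positivity
      have i0 := hTf.1 P hP
      have i1 := f1.1 P hP
      have i2 := f2.1 P hP
      have i3 := f3.1 P hP
      have i5 := (hX1 (m + n)).1 P hP
      have hpt : ∀ ω, |T ω + X (m + n) ω| ^ r ≤
          (1 + C * v / l ^ 2) * |T ω| ^ r + r * (max (T ω) 0 ^ (r - 1) * X (m + n) ω)
          + r * (max (-T ω) 0 ^ (r - 1) * (-X (m + n) ω))
          + C * (|T ω| ^ (r - 2) * (X (m + n) ω ^ 2 - v)) + C * |X (m + n) ω| ^ r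
          + C * v * l ^ (r - 2) := by
        intro ω
        have h1 := mb_ineq hr (T ω) (X (m + n) ω)
        rw [← hC] at h1
        have h2 := mul_le_mul_of_nonneg_left (mb_cut hr hl0 (abs_nonneg (T ω))) hCv
        have h3 : C * v * (|T ω| ^ r / l ^ 2) = C * v / l ^ 2 * |T ω| ^ r := by ring
        rw [mul_add, h3] at h2
        linarith
      have hI := integral_mono (hTY.1 P hP)
        ((((((i0.const_mul (1 + C * v / l ^ 2)).add (i1.const_mul r)).add (i2.const_mul r)).add
          (i3.const_mul C)).add (i5.const_mul C)).add (integrable_const (C * v * l ^ (r - 2)))) hpt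
      simp only [Pi.add_apply] at hI
      rw [integral_add (by fun_prop) (by fun_prop), integral_add (by fun_prop) (by fun_prop),
        integral_add (by fun_prop) (by fun_prop), integral_add (by fun_prop) (by fun_prop),
        integral_add (by fun_prop) (by fun_prop)] at hI
      simp only [integral_const_mul, integral_const, probReal_univ, smul_eq_mul, one_mul] at hI
      have j0 := mb_le hTf hP
      have j1 := g1 P hP
      have j2 := g2 P hP
      have j3 := g3 P hP
      have j5 := mb_le (hX1 (m + n)) hP
      rw [hm4] at j5
      have k0 := mul_le_mul_of_nonneg_left j0 (show 0 ≤ 1 + C * v / l ^ 2 by positivity)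
      have hr0 : 0 ≤ r := by linarith
      have hC0 : 0 ≤ C := by linarith
      have k1 := mul_nonpos_of_nonneg_of_nonpos hr0 j1
      have k2 := mul_nonpos_of_nonneg_of_nonpos hr0 j2
      have k3 := mul_nonpos_of_nonneg_of_nonpos hC0 j3
      have k5 := mul_le_mul_of_nonneg_left j5 hC0
      refine hI.trans ?_
      have : A + C * (v * (A / l ^ 2 + l ^ (r - 2)) + M)
        = (1 + C * v / l ^ 2) * A + C * v * l ^ (r - 2) + C * M := by ring
      rw [this]
      linarith
    · push_cast
      exact mb_num hr hL1 hN (by linarith) hv0 hM0 (by linarith) ih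
end

section
/- Let p ≥ 1 and let (X_i)_{i≥1} be a sequence of random variables on (Ω, 𝒜) that is IID under E̅, with E̅[X₁] = E̅[−X₁] = 0 and E̅[|X₁|^{p+1}] < ∞. Set S̄_n := S_n / √n. Assume that for every bounded continuous function φ : ℝ → ℝ with compact support the limit lim_{n→∞} E̅[φ(S̄_n)] exists. Then for every continuous function φ : ℝ → ℝ satisfying the growth condition |φ(x)| ≤ C(1 + |x|^p) for some constant C > 0, the limit lim_{n→∞} E̅[φ(S̄_n)] also exists. -/
open MeasureTheory Filter Topology

/-- Normalized sum `S̄_n = S_n / √n`. -/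
noncomputable def normalizedSum {Ω : Type*} (X : ℕ → Ω → ℝ) (n : ℕ) (ω : Ω) : ℝ :=
  partialSum X n ω / Real.sqrt n

lemma one_var (q : ℝ) (hq : 2 ≤ q) (t : ℝ) :
    |1 + t| ^ q ≤ 1 + q * t + q * 2 ^ q * (t ^ 2 + |t| ^ q) := by
  have h2 : (1:ℝ) ≤ 2 ^ q := Real.one_le_rpow (by norm_num) (by linarith)
  have habs : 0 ≤ |t| ^ q := by positivity
  rcases le_or_gt |t| 1 with ht | ht
  · obtain ⟨hl, hr⟩ := abs_le.mp ht
    rw [abs_of_nonneg (by linarith : 0 ≤ 1 + t)]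
    suffices h : (1 + t) ^ q ≤ 1 + q * t + q * 2 ^ q * t ^ 2 by
      have : 0 ≤ q * 2 ^ q * |t| ^ q := by positivity
      linarith
    rcases eq_or_lt_of_le hl with h0 | h0
    · subst h0
      simp only [add_neg_cancel]
      rw [Real.zero_rpow (by linarith)]
      nlinarith
    have hu : 0 < 1 + t := by linarith
    -- gradient inequality
    have e1 : (1 + t) ^ q = (1 + t) ^ (q - 1) * (1 + t) := by
      rw [← Real.rpow_add_one hu.ne']; congr 1; ring
    have g1 : (1 + t) ^ q ≤ 1 + q * (1 + t) ^ (q - 1) * t := by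
      have b := one_add_mul_self_le_rpow_one_add (s := (1 + t)⁻¹ - 1) (p := q)
        (by have : 0 < (1+t)⁻¹ := by positivity
            linarith) (by linarith)
      have hpos : 0 < (1 + t) ^ q := by positivity
      have b2 := mul_le_mul_of_nonneg_right b hpos.le
      have e2 : (1 + ((1 + t)⁻¹ - 1)) ^ q * (1 + t) ^ q = 1 := by
        rw [← Real.mul_rpow (by ring_nf; positivity) hu.le]
        have : (1 + ((1 + t)⁻¹ - 1)) * (1 + t) = 1 := by field_simp; ring
        rw [this, Real.one_rpow]
      rw [e2] at b2
      have e3 : (1 + q * ((1 + t)⁻¹ - 1)) * (1 + t) ^ q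
          = (1 + t) ^ q - q * (1 + t) ^ (q - 1) * t := by
        rw [e1]; field_simp; ring
      rw [e3] at b2
      linarith
    have hqn : (2:ℝ) ^ (q - 1) ≤ 2 ^ q :=
      Real.rpow_le_rpow_of_exponent_le (by norm_num) (by linarith)
    have hqq : q - 1 ≤ 2 ^ q := by
      have := one_add_mul_self_le_rpow_one_add (s := (1:ℝ)) (p := q) (by norm_num) (by linarith)
      norm_num at this
      linarith
    have g2 : (1 + t) ^ (q - 1) * t ≤ t + 2 ^ q * t ^ 2 := by
      rcases le_or_gt 0 t with hp | hn
      · have cv := (convexOn_rpow (p := q - 1) (by linarith)).2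
          (show (1:ℝ) ∈ Set.Ici 0 by simp) (show (2:ℝ) ∈ Set.Ici 0 by simp)
          (show 0 ≤ 1 - t by linarith) hp (by ring)
        simp only [smul_eq_mul, Real.one_rpow] at cv
        have e : (1 - t) * 1 + t * 2 = 1 + t := by ring
        rw [e] at cv
        have : (1 + t) ^ (q - 1) ≤ 1 + 2 ^ q * t := by nlinarith
        nlinarith
      · have b := one_add_mul_self_le_rpow_one_add (s := t) (p := q - 1) hl (by linarith)
        have : 1 + 2 ^ q * t ≤ (1 + t) ^ (q - 1) := by nlinarith
        nlinarith
    nlinarith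
  · have h1 : |1 + t| ≤ 2 * |t| := by
      have := abs_add_le 1 t
      rw [abs_one] at this; linarith
    have h3 : |1 + t| ^ q ≤ 2 ^ q * |t| ^ q := by
      rw [← Real.mul_rpow (by norm_num) (abs_nonneg t)]
      exact Real.rpow_le_rpow (abs_nonneg _) h1 (by linarith)
    have h4 : |t| ≤ |t| ^ q := by
      calc |t| = |t| ^ (1:ℝ) := (Real.rpow_one _).symm
        _ ≤ _ := Real.rpow_le_rpow_of_exponent_le ht.le (by linarith)
    have h5 : -|t| ≤ t := neg_abs_le t
    have h2' : (2:ℝ) ≤ 2 ^ q := by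
      calc (2:ℝ) = 2 ^ (1:ℝ) := (Real.rpow_one _).symm
        _ ≤ _ := Real.rpow_le_rpow_of_exponent_le (by norm_num) (by linarith)
    have h6 : 2 ^ q + q ≤ q * 2 ^ q := by nlinarith
    have h7 : (2 ^ q + q) * |t| ^ q ≤ q * 2 ^ q * |t| ^ q :=
      mul_le_mul_of_nonneg_right h6 habs
    have h8 : 0 ≤ q * 2 ^ q * t ^ 2 := by positivity
    nlinarith

lemma two_var_pos (q : ℝ) (hq : 2 ≤ q) (x y : ℝ) (hx : 0 < x) :
    |x + y| ^ q ≤ |x| ^ q + q * (|x| ^ (q - 2) * x) * y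
      + q * 2 ^ q * (|x| ^ (q - 2) * y ^ 2 + |y| ^ q) := by
  have h := one_var q hq (y / x)
  have hxq : 0 < x ^ q := by positivity
  have h2 := mul_le_mul_of_nonneg_right h hxq.le
  have e1 : |1 + y / x| ^ q * x ^ q = |x + y| ^ q := by
    rw [← Real.mul_rpow (abs_nonneg _) hx.le]
    congr 1
    nth_rewrite 2 [← abs_of_pos hx]
    rw [← abs_mul]; congr 1; field_simp
  have e2 : |y / x| ^ q * x ^ q = |y| ^ q := by
    rw [← Real.mul_rpow (abs_nonneg _) hx.le]
    congr 1
    nth_rewrite 2 [← abs_of_pos hx]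
    rw [← abs_mul]; congr 1; field_simp
  have e3 : x ^ q = x ^ (q - 2) * x ^ 2 := by
    rw [← Real.rpow_natCast x 2, ← Real.rpow_add hx]; congr 1; norm_num
  rw [e1] at h2
  rw [abs_of_pos hx]
  refine h2.trans (le_of_eq ?_)
  have : (1 + q * (y / x) + q * 2 ^ q * ((y / x) ^ 2 + |y / x| ^ q)) * x ^ q
    = x ^ q + q * (y / x) * x ^ q + q * 2 ^ q * ((y / x) ^ 2 * x ^ q + |y / x| ^ q * x ^ q) := by
    ring
  rw [this, e2]
  have e4 : q * (y / x) * x ^ q = q * (x ^ (q - 2) * x) * y := by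
    rw [e3]; field_simp
  have e5 : (y / x) ^ 2 * x ^ q = x ^ (q - 2) * y ^ 2 := by
    rw [e3]; field_simp
  rw [e4, e5]

lemma two_var (q : ℝ) (hq : 2 ≤ q) (x y : ℝ) :
    |x + y| ^ q ≤ |x| ^ q + q * (|x| ^ (q - 2) * x) * y
      + q * 2 ^ q * (|x| ^ (q - 2) * y ^ 2 + |y| ^ q) := by
  rcases lt_trichotomy x 0 with hx | hx | hx
  · have h := two_var_pos q hq (-x) (-y) (by linarith)
    have e : -x + -y = -(x + y) := by ring
    rw [e] at h
    simp only [abs_neg] at h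
    linarith
  · subst hx
    have h2 : (1:ℝ) ≤ 2 ^ q := Real.one_le_rpow (by norm_num) (by linarith)
    have h3 : 1 ≤ q * 2 ^ q := by nlinarith
    have h4 : 0 ≤ |y| ^ q := by positivity
    have h5 : 0 ≤ |(0:ℝ)| ^ (q - 2) * y ^ 2 := by positivity
    have h6 : 0 ≤ |(0:ℝ)| ^ q := by positivity
    rw [zero_add]
    nlinarith [mul_le_mul_of_nonneg_right h3 h4, mul_nonneg (by linarith : 0 ≤ q * 2 ^ q) h5]
  · exact two_var_pos q hq x y hx

/-- Young-type bounds. -/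
lemma pow_mul_le (q r s : ℝ) (hr : 0 ≤ r) (hs : 0 ≤ s) (hrs : r + s = q) (a b : ℝ)
    (ha : 0 ≤ a) (hb : 0 ≤ b) : a ^ r * b ^ s ≤ a ^ q + b ^ q := by
  have key : ∀ m : ℝ, a ≤ m → b ≤ m → 0 ≤ m → a ^ r * b ^ s ≤ m ^ q := by
    intro m h1 h2 hm
    rw [← hrs, Real.rpow_add_of_nonneg hm hr hs]
    gcongr
  have h1 : 0 ≤ a ^ q := by positivity
  have h2 : 0 ≤ b ^ q := by positivity
  rcases le_total a b with h | h
  · linarith [key b h le_rfl hb]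
  · linarith [key a le_rfl h ha]
  
lemma low_le (q : ℝ) (hq : 2 ≤ q) (l u : ℝ) (hl : 0 < l) (hu : 0 ≤ u) :
    u ^ (q - 2) ≤ u ^ q / l ^ 2 + l ^ (q - 2) := by
  have h0 : 0 ≤ u ^ q / l ^ 2 := by positivity
  have h1 : 0 ≤ l ^ (q - 2) := by positivity
  rcases le_total u l with h | h
  · have := Real.rpow_le_rpow hu h (by linarith : 0 ≤ q - 2)
    linarith
  · have hu' : 0 < u := lt_of_lt_of_le hl h
    have e3 : u ^ q = u ^ (q - 2) * u ^ 2 := by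
      rw [← Real.rpow_natCast u 2, ← Real.rpow_add hu']; congr 1; norm_num
    have : u ^ (q - 2) ≤ u ^ q / l ^ 2 := by
      rw [le_div_iff₀ (by positivity), e3]
      gcongr
    linarith

section
variable {Ω : Type*} [MeasurableSpace Ω]

lemma integral_le_upperExp {𝒬 : Set (Measure Ω)} {X : Ω → ℝ} (h : HasFiniteUpperExp 𝒬 X)
    {P : Measure Ω} (hP : P ∈ 𝒬) : ∫ ω, X ω ∂P ≤ upperExp 𝒬 X :=
  le_csSup h.2 ⟨P, hP, rfl⟩

lemma upperExp_le {𝒬 : Set (Measure Ω)} (h𝒬 : 𝒬.Nonempty) {X : Ω → ℝ} {B : ℝ}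
    (h : ∀ P ∈ 𝒬, ∫ ω, X ω ∂P ≤ B) : upperExp 𝒬 X ≤ B := by
  apply csSup_le (h𝒬.image _)
  rintro _ ⟨P, hP, rfl⟩
  exact h P hP

lemma hasFinite_of {𝒬 : Set (Measure Ω)} {X : Ω → ℝ} {B : ℝ}
    (h : ∀ P ∈ 𝒬, Integrable X P) (h' : ∀ P ∈ 𝒬, ∫ ω, X ω ∂P ≤ B) : HasFiniteUpperExp 𝒬 X := by
  refine ⟨h, B, ?_⟩
  rintro _ ⟨P, hP, rfl⟩
  exact h' P hP

lemma upperExp_const_mul (𝒬 : Set (Measure Ω)) (X : Ω → ℝ) (c : ℝ) (hc : 0 ≤ c) :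
    upperExp 𝒬 (fun ω => c * X ω) = c * upperExp 𝒬 X := by
  unfold upperExp
  rw [← smul_eq_mul, ← Real.sSup_smul_of_nonneg hc]
  congr 1
  ext y
  simp [Set.mem_smul_set, integral_const_mul]

/-- Moments of `X i` are controlled by those of `X 0`. -/
lemma moment_i {𝒬 : Set (Measure Ω)} (hprob : ∀ P ∈ 𝒬, IsProbabilityMeasure P)
    {X : ℕ → Ω → ℝ} (hmeas : ∀ i, Measurable (X i))
    (hiid : IsIIDUnder 𝒬 X) (h𝒬 : 𝒬.Nonempty) {q : ℝ} 
    (hmom : HasFiniteUpperExp 𝒬 (fun ω => |X 0 ω| ^ q)) (i : ℕ) :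
    ∀ P ∈ 𝒬, Integrable (fun ω => |X i ω| ^ q) P ∧
      ∫ ω, |X i ω| ^ q ∂P ≤ upperExp 𝒬 (fun ω => |X 0 ω| ^ q) := by
  set M := upperExp 𝒬 (fun ω => |X 0 ω| ^ q) with hM
  have hφm : ∀ N : ℕ, Measurable (fun x : ℝ => min (|x| ^ q) (N : ℝ)) := by
    intro N; fun_prop
  have hint : ∀ (N j : ℕ), ∀ P ∈ 𝒬, Integrable (fun ω => min (|X j ω| ^ q) (N : ℝ)) P := by
    intro N j P hP
    have := hprob P hP
    apply Integrable.of_bound (C := (N:ℝ)) (((hφm N).comp (hmeas j)).aestronglyMeasurable)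
    filter_upwards with ω
    have h1 : 0 ≤ |X j ω| ^ q := by positivity
    have h2 : (0:ℝ) ≤ N := by positivity
    simp only [Function.comp]
    rw [Real.norm_of_nonneg (le_min h1 h2)]
    exact min_le_right _ _
  have hfin : ∀ N j : ℕ, HasFiniteUpperExp 𝒬 (fun ω => min (|X j ω| ^ q) (N : ℝ)) := by
    intro N j
    refine hasFinite_of (B := N) (hint N j) ?_
    intro P hP
    have := hprob P hP
    calc _ ≤ ∫ ω, (N:ℝ) ∂P := integral_mono (hint N j P hP) (integrable_const _)
          (fun ω => min_le_right _ _)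
      _ = N := by simp
  have hb : ∀ N : ℕ, ∀ P ∈ 𝒬, ∫ ω, min (|X i ω| ^ q) (N : ℝ) ∂P ≤ M := by
    intro N P hP
    refine (integral_le_upperExp (hfin N i) hP).trans ?_
    rw [hiid.1 i _ (hφm N) (hfin N i) (hfin N 0)]
    apply upperExp_le h𝒬
    intro P' hP'
    refine le_trans ?_ (integral_le_upperExp hmom hP')
    exact integral_mono (hint N 0 P' hP') (hmom.1 P' hP') (fun ω => min_le_left _ _)
  intro P hP
  have := hprob P hP
  have hnn : ∀ ω, 0 ≤ |X i ω| ^ q := fun ω => by positivity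
  have hmi : Measurable (fun ω => |X i ω| ^ q) := by
    have := hmeas i; fun_prop
  have hlin : ∫⁻ ω, ENNReal.ofReal (|X i ω| ^ q) ∂P ≤ ENNReal.ofReal M := by
    have heq : ∀ ω, ENNReal.ofReal (|X i ω| ^ q)
        = ⨆ N : ℕ, ENNReal.ofReal (min (|X i ω| ^ q) (N : ℝ)) := by
      intro ω
      apply le_antisymm
      · obtain ⟨N, hN⟩ := exists_nat_ge (|X i ω| ^ q)
        refine le_iSup_of_le N ?_
        rw [min_eq_left hN]
      · exact iSup_le fun N => ENNReal.ofReal_le_ofReal (min_le_left _ _)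
    simp_rw [heq]
    rw [lintegral_iSup]
    · apply iSup_le
      intro N
      rw [← ofReal_integral_eq_lintegral_ofReal (hint N i P hP)]
      · exact ENNReal.ofReal_le_ofReal (hb N P hP)
      · filter_upwards with ω
        exact le_min (hnn ω) (by positivity)
    · intro N
      exact ((hφm N).comp (hmeas i)).ennreal_ofReal
    · intro N N' h ω
      apply ENNReal.ofReal_le_ofReal
      exact min_le_min_left _ (by exact_mod_cast h)
  have hInt : Integrable (fun ω => |X i ω| ^ q) P := by
    refine ⟨hmi.aestronglyMeasurable, ?_⟩
    rw [hasFiniteIntegral_iff_ofReal (Eventually.of_forall hnn)]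
    exact lt_of_le_of_lt hlin ENNReal.ofReal_lt_top
  refine ⟨hInt, ?_⟩
  have hM0 : 0 ≤ M := le_trans (integral_nonneg fun ω => by
    exact le_min (hnn ω) (by positivity)) (hb 0 P hP)
  rw [integral_eq_lintegral_of_nonneg_ae (Eventually.of_forall hnn) hmi.aestronglyMeasurable]
  exact ENNReal.toReal_le_of_le_ofReal hM0 hlin

lemma integral_zero_i {𝒬 : Set (Measure Ω)} (hprob : ∀ P ∈ 𝒬, IsProbabilityMeasure P)
    {X : ℕ → Ω → ℝ} (hmeas : ∀ i, Measurable (X i))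
    (hiid : IsIIDUnder 𝒬 X) (h𝒬 : 𝒬.Nonempty) {q : ℝ} (hq : 2 ≤ q)
    (hmean : upperExp 𝒬 (X 0) = 0)
    (hmean' : upperExp 𝒬 (fun ω => -X 0 ω) = 0)
    (hmom : HasFiniteUpperExp 𝒬 (fun ω => |X 0 ω| ^ q)) (i : ℕ) :
    ∀ P ∈ 𝒬, Integrable (X i) P ∧ ∫ ω, X i ω ∂P = 0 := by
  have hle : ∀ x : ℝ, |x| ≤ 1 + |x| ^ q := by
    intro x
    have := pow_mul_le q (q - 1) 1 (by linarith) (by norm_num) (by ring) 1 |x| (by norm_num)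
      (abs_nonneg x)
    simpa using this
  have hint1 : ∀ j, ∀ P ∈ 𝒬, Integrable (fun ω => 1 + |X j ω| ^ q) P := by
    intro j P hP
    have := hprob P hP
    exact (integrable_const _).add (moment_i hprob hmeas hiid h𝒬 hmom j P hP).1
  have hint : ∀ j, ∀ P ∈ 𝒬, Integrable (X j) P := by
    intro j P hP
    refine (hint1 j P hP).mono' (hmeas j).aestronglyMeasurable ?_
    filter_upwards with ω
    exact hle _
  have hbd : ∀ j, ∀ P ∈ 𝒬, ∫ ω, |X j ω| ∂P ≤ 1 + upperExp 𝒬 (fun ω => |X 0 ω| ^ q) := by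
    intro j P hP
    have := hprob P hP
    calc _ ≤ ∫ ω, (1 + |X j ω| ^ q) ∂P := integral_mono (hint j P hP).abs (hint1 j P hP)
          (fun ω => hle _)
      _ = 1 + ∫ ω, |X j ω| ^ q ∂P := by
          rw [integral_add (integrable_const _) (moment_i hprob hmeas hiid h𝒬 hmom j P hP).1]
          simp
      _ ≤ _ := by
          gcongr
          exact (moment_i hprob hmeas hiid h𝒬 hmom j P hP).2
  have f1 : ∀ j, HasFiniteUpperExp 𝒬 (fun ω => X j ω) := fun j =>
    hasFinite_of (hint j) (fun P hP => (integral_mono (hint j P hP) (hint j P hP).abs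
      (fun ω => le_abs_self _)).trans (hbd j P hP))
  have f2 : ∀ j, HasFiniteUpperExp 𝒬 (fun ω => -X j ω) := fun j =>
    hasFinite_of (fun P hP => (hint j P hP).neg) 
      (fun P hP => (integral_mono (hint j P hP).neg (hint j P hP).abs
      (fun ω => neg_le_abs _)).trans (hbd j P hP))
  intro P hP
  refine ⟨hint i P hP, le_antisymm ?_ ?_⟩
  · refine (integral_le_upperExp (f1 i) hP).trans ?_
    rw [hiid.1 i (fun x => x) measurable_id (f1 i) (f1 0)]
    exact hmean.le
  · have := integral_le_upperExp (f2 i) hP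
    rw [hiid.1 i (fun x => -x) measurable_neg (f2 i) (f2 0), hmean', integral_neg] at this
    linarith

lemma indep_partialSum {𝒬 : Set (Measure Ω)} {X : ℕ → Ω → ℝ} 
    (hiid : IsIIDUnder 𝒬 X) (n : ℕ) (φ : ℝ → ℝ → ℝ) 
    (hφ : Measurable (fun z : ℝ × ℝ => φ z.1 z.2))
    (h1 : HasFiniteUpperExp 𝒬 (fun ω => φ (partialSum X (n + 1) ω) (X (n + 1) ω)))
    (h2 : ∀ s, HasFiniteUpperExp 𝒬 (fun ω => φ s (X (n + 1) ω)))
    (h3 : HasFiniteUpperExp 𝒬 (fun ω => upperExp 𝒬 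
      (fun ω' => φ (partialSum X (n + 1) ω) (X (n + 1) ω')))) :
    upperExp 𝒬 (fun ω => φ (partialSum X (n + 1) ω) (X (n + 1) ω)) = 
      upperExp 𝒬 (fun ω => upperExp 𝒬 
        (fun ω' => φ (partialSum X (n + 1) ω) (X (n + 1) ω'))) := by
  have e : ∀ ω, (∑ j : Fin (n + 1), X (j : ℕ) ω) = partialSum X (n + 1) ω := by
    intro ω
    rw [partialSum, Finset.sum_range]
  have h := hiid.2 n (fun x y => φ (∑ j, x j) y) (by
    have hm : Measurable (fun z : (Fin (n + 1) → ℝ) × ℝ => ((∑ j, z.1 j, z.2) : ℝ × ℝ)) := by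
      fun_prop
    exact hφ.comp hm)
  simp only [e] at h
  exact h h1 (fun x => h2 _) h3

lemma measurable_partialSum {X : ℕ → Ω → ℝ} (hmeas : ∀ i, Measurable (X i)) (n : ℕ) :
    Measurable (partialSum X n) := by
  unfold partialSum
  fun_prop

end

section
variable {Ω : Type*} [MeasurableSpace Ω]

lemma step_moment {𝒬 : Set (Measure Ω)} (hprob : ∀ P ∈ 𝒬, IsProbabilityMeasure P)
    {X : ℕ → Ω → ℝ} (hmeas : ∀ i, Measurable (X i))
    (hiid : IsIIDUnder 𝒬 X) (h𝒬 : 𝒬.Nonempty) {q M : ℝ} (hq : 2 ≤ q)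
    (hzero : ∀ i, ∀ P ∈ 𝒬, Integrable (X i) P ∧ ∫ ω, X i ω ∂P = 0)
    (hM : ∀ i, ∀ P ∈ 𝒬, Integrable (fun ω => |X i ω| ^ q) P ∧ ∫ ω, |X i ω| ^ q ∂P ≤ M)
    (n : ℕ) (A l : ℝ) (hl : 0 < l)
    (hA : ∀ P ∈ 𝒬, Integrable (fun ω => |partialSum X (n + 1) ω| ^ q) P ∧
      ∫ ω, |partialSum X (n + 1) ω| ^ q ∂P ≤ A) :
    ∀ P ∈ 𝒬, Integrable (fun ω => |partialSum X (n + 2) ω| ^ q) P ∧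
      ∫ ω, |partialSum X (n + 2) ω| ^ q ∂P ≤
        A + q * 2 ^ q * ((1 + M) * (A / l ^ 2 + l ^ (q - 2)) + M) := by
  have hSm := measurable_partialSum hmeas (n + 1)
  have hYm := hmeas (n + 1)
  set S := partialSum X (n + 1) with hS
  set Y := X (n + 1) with hY
  have hS2 : ∀ ω, partialSum X (n + 2) ω = S ω + Y ω := by
    intro ω; simp [hS, hY, partialSum, Finset.sum_range_succ]
  have hsum : ∀ P ∈ 𝒬, Integrable (fun ω => |S ω| ^ q + |Y ω| ^ q) P := fun P hP =>
    (hA P hP).1.add (hM (n + 1) P hP).1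
  have hsumle : ∀ P ∈ 𝒬, ∫ ω, (|S ω| ^ q + |Y ω| ^ q) ∂P ≤ A + M := fun P hP => by
    rw [integral_add (hA P hP).1 (hM (n + 1) P hP).1]
    exact add_le_add (hA P hP).2 (hM (n + 1) P hP).2
  have hle1 : ∀ s y : ℝ, |(|s| ^ (q - 2) * s) * y| ≤ |s| ^ q + |y| ^ q := by
    intro s y
    have h := pow_mul_le q (q - 1) 1 (by linarith) (by norm_num) (by ring) |s| |y|
      (abs_nonneg _) (abs_nonneg _)
    rw [Real.rpow_one] at h
    rw [abs_mul, abs_mul, abs_of_nonneg (by positivity : 0 ≤ |s| ^ (q - 2))]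
    have e : |s| ^ (q - 2) * |s| = |s| ^ (q - 1) := by
      have := Real.rpow_add_of_nonneg (abs_nonneg s) (by linarith : 0 ≤ q - 2) zero_le_one
      rw [Real.rpow_one] at this
      rw [← this]; congr 1; ring
    rw [e]; exact h
  have hle2 : ∀ s y : ℝ, |s| ^ (q - 2) * y ^ 2 ≤ |s| ^ q + |y| ^ q := by
    intro s y
    have h := pow_mul_le q (q - 2) 2 (by linarith) (by norm_num) (by ring) |s| |y|
      (abs_nonneg _) (abs_nonneg _)
    rw [Real.rpow_two, sq_abs] at h
    exact h
  -- integrability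
  have i1 : ∀ P ∈ 𝒬, Integrable (fun ω => (|S ω| ^ (q - 2) * S ω) * Y ω) P := fun P hP =>
    (hsum P hP).mono' (by fun_prop) (Eventually.of_forall fun ω => hle1 _ _)
  have i2 : ∀ P ∈ 𝒬, Integrable (fun ω => |S ω| ^ (q - 2) * Y ω ^ 2) P := fun P hP =>
    (hsum P hP).mono' (by fun_prop) (Eventually.of_forall fun ω => by
      rw [Real.norm_of_nonneg (by positivity)]; exact hle2 _ _)
  have i3 : ∀ P ∈ 𝒬, Integrable (fun ω => Y ω ^ 2) P ∧ ∫ ω, Y ω ^ 2 ∂P ≤ 1 + M := fun P hP => by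
    have := hprob P hP
    have hm := hM (n + 1) P hP
    have hi : Integrable (fun ω => 1 + |Y ω| ^ q) P := (integrable_const _).add hm.1
    have hle : ∀ ω, Y ω ^ 2 ≤ 1 + |Y ω| ^ q := fun ω => by simpa using hle2 1 (Y ω)
    have hi2 : Integrable (fun ω => Y ω ^ 2) P :=
      hi.mono' (by fun_prop) (Eventually.of_forall fun ω => by
        rw [Real.norm_of_nonneg (by positivity)]; exact hle ω)
    refine ⟨hi2, (integral_mono hi2 hi hle).trans ?_⟩
    rw [integral_add (integrable_const _) hm.1]
    simp only [integral_const, probReal_univ, smul_eq_mul, mul_one]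
    linarith [hm.2]
  have i4 : ∀ P ∈ 𝒬, Integrable (fun ω => |S ω| ^ (q - 2)) P ∧
      ∫ ω, |S ω| ^ (q - 2) ∂P ≤ A / l ^ 2 + l ^ (q - 2) := fun P hP => by
    have := hprob P hP
    have hm := hA P hP
    have hi : Integrable (fun ω => |S ω| ^ q / l ^ 2 + l ^ (q - 2)) P :=
      (hm.1.div_const _).add (integrable_const _)
    have hle : ∀ ω, |S ω| ^ (q - 2) ≤ |S ω| ^ q / l ^ 2 + l ^ (q - 2) := fun ω =>
      low_le q hq l _ hl (abs_nonneg _)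
    have hms : Measurable (fun ω => |S ω| ^ (q - 2)) := by fun_prop
    have hi2 : Integrable (fun ω => |S ω| ^ (q - 2)) P :=
      hi.mono' hms.aestronglyMeasurable (Eventually.of_forall fun ω => by
        rw [Real.norm_of_nonneg (by positivity)]; exact hle ω)
    refine ⟨hi2, (integral_mono hi2 hi hle).trans ?_⟩
    rw [integral_add (hm.1.div_const _) (integrable_const _), integral_div]
    simp only [integral_const, probReal_univ, smul_eq_mul, one_mul]
    gcongr
    exact hm.2
  -- cross term
  have c0 : ∀ c : ℝ, upperExp 𝒬 (fun ω => c * Y ω) = 0 := by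
    intro c
    apply le_antisymm
    · apply upperExp_le h𝒬
      intro P hP
      rw [integral_const_mul, (hzero (n + 1) P hP).2, mul_zero]
    · obtain ⟨P, hP⟩ := h𝒬
      have hf : HasFiniteUpperExp 𝒬 (fun ω => c * Y ω) :=
        hasFinite_of (B := 0) (fun P hP => (hzero (n + 1) P hP).1.const_mul c)
          (fun P hP => by rw [integral_const_mul, (hzero (n + 1) P hP).2, mul_zero])
      have := integral_le_upperExp hf hP
      rwa [integral_const_mul, (hzero (n + 1) P hP).2, mul_zero] at this
  have f1 : HasFiniteUpperExp 𝒬 (fun ω => (|S ω| ^ (q - 2) * S ω) * Y ω) :=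
    hasFinite_of i1 (fun P hP => (integral_mono (i1 P hP) (hsum P hP)
      (fun ω => (le_abs_self _).trans (hle1 _ _))).trans (hsumle P hP))
  have f2 : HasFiniteUpperExp 𝒬 (fun ω => |S ω| ^ (q - 2) * Y ω ^ 2) :=
    hasFinite_of i2 (fun P hP => (integral_mono (i2 P hP) (hsum P hP)
      (fun ω => hle2 _ _)).trans (hsumle P hP))
  have C1 : upperExp 𝒬 (fun ω => (|S ω| ^ (q - 2) * S ω) * Y ω) = 0 := by
    have h := indep_partialSum hiid n (fun s y => (|s| ^ (q - 2) * s) * y) (by fun_prop) f1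
      (fun s => hasFinite_of (B := 0) (fun P hP => (hzero (n + 1) P hP).1.const_mul _)
          (fun P hP => by rw [integral_const_mul, (hzero (n + 1) P hP).2, mul_zero]))
      (by
        simp only [← hY, ← hS, c0]
        exact hasFinite_of (B := 0) (fun P hP => integrable_zero _ _ _) (fun P hP => by simp))
    rw [← hS, ← hY] at h
    rw [h]
    simp only [c0]
    have := upperExp_const_mul 𝒬 (fun _ : Ω => (0:ℝ)) 0 le_rfl
    simpa using this
  have f3 : HasFiniteUpperExp 𝒬 (fun ω => Y ω ^ 2) :=
    hasFinite_of (fun P hP => (i3 P hP).1) (fun P hP => (i3 P hP).2)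
  set v := upperExp 𝒬 (fun ω => Y ω ^ 2) with hv
  have hv1 : v ≤ 1 + M := upperExp_le h𝒬 (fun P hP => (i3 P hP).2)
  have hv0 : 0 ≤ v := by
    obtain ⟨P, hP⟩ := h𝒬
    exact le_trans (integral_nonneg fun ω => by positivity) (integral_le_upperExp f3 hP)
  have hB0 : 0 ≤ A / l ^ 2 + l ^ (q - 2) := by
    obtain ⟨P, hP⟩ := h𝒬
    exact le_trans (integral_nonneg fun ω => by positivity) (i4 P hP).2
  have hψ : ∀ s : ℝ, upperExp 𝒬 (fun ω => |s| ^ (q - 2) * Y ω ^ 2) = |s| ^ (q - 2) * v :=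
    fun s => upperExp_const_mul 𝒬 _ _ (by positivity)
  have hψle : ∀ P ∈ 𝒬, ∫ ω, |S ω| ^ (q - 2) * v ∂P ≤ (1 + M) * (A / l ^ 2 + l ^ (q - 2)) := by
    intro P hP
    rw [integral_mul_const, mul_comm]
    exact mul_le_mul hv1 (i4 P hP).2 (integral_nonneg fun ω => by positivity) (by linarith)
  have C2 : upperExp 𝒬 (fun ω => |S ω| ^ (q - 2) * Y ω ^ 2)
      ≤ (1 + M) * (A / l ^ 2 + l ^ (q - 2)) := by
    have h := indep_partialSum hiid n (fun s y => |s| ^ (q - 2) * y ^ 2) (by fun_prop) f2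
      (fun s => hasFinite_of (B := |s| ^ (q - 2) * (1 + M))
          (fun P hP => (i3 P hP).1.const_mul _)
          (fun P hP => by
            rw [integral_const_mul]
            exact mul_le_mul_of_nonneg_left (i3 P hP).2 (by positivity)))
      (by
        simp only [← hY, ← hS, hψ]
        exact hasFinite_of (fun P hP => (i4 P hP).1.mul_const _) hψle)
    rw [← hS, ← hY] at h
    rw [h]
    simp only [hψ]
    exact upperExp_le h𝒬 hψle
  intro P hP
  have hm := hM (n + 1) P hP
  have hR : Integrable (fun ω => |S ω| ^ q + q * ((|S ω| ^ (q - 2) * S ω) * Y ω)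
      + q * 2 ^ q * (|S ω| ^ (q - 2) * Y ω ^ 2 + |Y ω| ^ q)) P :=
    ((hA P hP).1.add ((i1 P hP).const_mul _)).add (((i2 P hP).add hm.1).const_mul _)
  have hle : ∀ ω, |partialSum X (n + 2) ω| ^ q ≤ |S ω| ^ q + q * ((|S ω| ^ (q - 2) * S ω) * Y ω)
      + q * 2 ^ q * (|S ω| ^ (q - 2) * Y ω ^ 2 + |Y ω| ^ q) := by
    intro ω
    rw [hS2, ← mul_assoc]
    exact two_var q hq _ _
  have hI : Integrable (fun ω => |partialSum X (n + 2) ω| ^ q) P := by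
    have hm2 := measurable_partialSum hmeas (n + 2)
    have hms : Measurable (fun ω => |partialSum X (n + 2) ω| ^ q) := by fun_prop
    refine hR.mono' hms.aestronglyMeasurable (Eventually.of_forall fun ω => ?_)
    rw [Real.norm_of_nonneg (by positivity)]; exact hle ω
  refine ⟨hI, (integral_mono hI hR hle).trans ?_⟩
  have j1 : Integrable (fun ω => |S ω| ^ q + q * ((|S ω| ^ (q - 2) * S ω) * Y ω)) P :=
    (hA P hP).1.add ((i1 P hP).const_mul _)
  have j2 : Integrable (fun ω => q * 2 ^ q * (|S ω| ^ (q - 2) * Y ω ^ 2 + |Y ω| ^ q)) P :=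
    ((i2 P hP).add hm.1).const_mul _
  rw [integral_add j1 j2,
    integral_add (hA P hP).1 ((i1 P hP).const_mul _), integral_const_mul, integral_const_mul,
    integral_add (i2 P hP) hm.1]
  have k1 := integral_le_upperExp f1 hP
  have k2 := integral_le_upperExp f2 hP
  rw [C1] at k1
  have k3 : q * ∫ ω, (|S ω| ^ (q - 2) * S ω) * Y ω ∂P ≤ 0 :=
    mul_nonpos_of_nonneg_of_nonpos (by linarith) k1
  have k4 : 0 ≤ q * 2 ^ q := by positivity
  have k5 := mul_le_mul_of_nonneg_left (add_le_add (k2.trans C2) hm.2) k4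
  linarith [(hA P hP).2]

lemma moment_bound {𝒬 : Set (Measure Ω)} (hprob : ∀ P ∈ 𝒬, IsProbabilityMeasure P)
    {X : ℕ → Ω → ℝ} (hmeas : ∀ i, Measurable (X i))
    (hiid : IsIIDUnder 𝒬 X) (h𝒬 : 𝒬.Nonempty) {q M : ℝ} (hq : 2 ≤ q)
    (hzero : ∀ i, ∀ P ∈ 𝒬, Integrable (X i) P ∧ ∫ ω, X i ω ∂P = 0)
    (hM : ∀ i, ∀ P ∈ 𝒬, Integrable (fun ω => |X i ω| ^ q) P ∧ ∫ ω, |X i ω| ^ q ∂P ≤ M)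
    (hM0 : 0 ≤ M) :
    ∃ K : ℝ, 0 ≤ K ∧ ∀ n : ℕ, ∀ P ∈ 𝒬,
      Integrable (fun ω => |partialSum X (n + 1) ω| ^ q) P ∧
      ∫ ω, |partialSum X (n + 1) ω| ^ q ∂P ≤ K * ((n + 1 : ℕ) : ℝ) ^ (q / 2) := by
  set C := q * 2 ^ q with hC
  have hC1 : 1 ≤ C := by
    have h2 : (1:ℝ) ≤ 2 ^ q := Real.one_le_rpow (by norm_num) (by linarith)
    nlinarith
  set c := Real.sqrt (2 * C * (1 + M)) with hc
  have hcpos : 0 < c := Real.sqrt_pos.mpr (by positivity)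
  have hc2 : c ^ 2 = 2 * C * (1 + M) := Real.sq_sqrt (by positivity)
  set D := C * (1 + M) * c ^ (q - 2) + C * M with hD
  have hDM : M ≤ D := by
    have : 0 ≤ C * (1 + M) * c ^ (q - 2) := by positivity
    nlinarith
  have hD0 : 0 ≤ D := hM0.trans hDM
  refine ⟨2 * D, by positivity, ?_⟩
  intro n
  induction n with
  | zero =>
    intro P hP
    have e : ∀ ω, partialSum X (0 + 1) ω = X 0 ω := fun ω => by simp [partialSum]
    simp only [e]
    refine ⟨(hM 0 P hP).1, (hM 0 P hP).2.trans ?_⟩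
    simp
    linarith
  | succ n ih =>
    set N : ℝ := ((n + 1 : ℕ) : ℝ) with hN
    have hN1 : 1 ≤ N := by rw [hN]; exact_mod_cast Nat.le_add_left 1 n
    have hN0 : 0 < N := by linarith
    have hl : 0 < c * Real.sqrt N := by positivity
    have h := step_moment hprob hmeas hiid h𝒬 hq hzero hM n _ _ hl ih
    intro P hP
    refine ⟨(h P hP).1, (h P hP).2.trans ?_⟩
    set r := N ^ (q / 2 - 1) with hr
    have hr1 : 1 ≤ r := Real.one_le_rpow hN1 (by linarith)
    have e1 : N ^ (q / 2) = r * N := by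
      rw [hr, ← Real.rpow_add_one hN0.ne']; congr 1; ring
    have e2 : (Real.sqrt N) ^ (q - 2) = r := by
      rw [Real.sqrt_eq_rpow, ← Real.rpow_mul hN0.le, hr]; congr 1; ring
    have e3 : (c * Real.sqrt N) ^ (q - 2) = c ^ (q - 2) * r := by
      rw [Real.mul_rpow hcpos.le (Real.sqrt_nonneg _), e2]
    have e4 : (c * Real.sqrt N) ^ 2 = 2 * C * (1 + M) * N := by
      rw [mul_pow, hc2, Real.sq_sqrt hN0.le]
    have e5 : ((n + 1 + 1 : ℕ) : ℝ) = N + 1 := by rw [hN]; push_cast; ring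
    have e6 : r * (N + 1) ≤ (N + 1) ^ (q / 2) := by
      have : (N + 1) ^ (q / 2) = (N + 1) ^ (q / 2 - 1) * (N + 1) := by
        rw [← Real.rpow_add_one (by linarith)]; congr 1; ring
      rw [this]
      exact mul_le_mul_of_nonneg_right
        (Real.rpow_le_rpow hN0.le (by linarith) (by linarith)) (by linarith)
    rw [e3, e4, e5, e1]
    have e7 : C * ((1 + M) * (2 * D * (r * N) / (2 * C * (1 + M) * N) + c ^ (q - 2) * r) + M)
        = D * r + C * (1 + M) * c ^ (q - 2) * r + C * M := by
      have : 0 < C := by linarith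
      have : 0 < 1 + M := by linarith
      field_simp
    rw [e7]
    have e8 : C * (1 + M) * c ^ (q - 2) * r + C * M ≤ D * r := by
      rw [hD]
      have : C * M ≤ C * M * r := le_mul_of_one_le_right (by positivity) hr1
      nlinarith
    have e9 := mul_le_mul_of_nonneg_left e6 (by positivity : 0 ≤ 2 * D)
    nlinarith

lemma norm_moment {𝒬 : Set (Measure Ω)} 
    {X : ℕ → Ω → ℝ} {q K : ℝ} (hq : 2 ≤ q) (hK0 : 0 ≤ K)
    (hK : ∀ n : ℕ, ∀ P ∈ 𝒬,
      Integrable (fun ω => |partialSum X (n + 1) ω| ^ q) P ∧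
      ∫ ω, |partialSum X (n + 1) ω| ^ q ∂P ≤ K * ((n + 1 : ℕ) : ℝ) ^ (q / 2)) (n : ℕ) :
    ∀ P ∈ 𝒬, Integrable (fun ω => |normalizedSum X n ω| ^ q) P ∧
      ∫ ω, |normalizedSum X n ω| ^ q ∂P ≤ K := by
  intro P hP
  cases n with
  | zero =>
    have e : ∀ ω, |normalizedSum X 0 ω| ^ q = 0 := fun ω => by
      simp [normalizedSum, Real.zero_rpow (by linarith : q ≠ 0)]
    simp only [e]
    exact ⟨integrable_zero _ _ _, by simpa using hK0⟩
  | succ n =>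
    set N : ℝ := ((n + 1 : ℕ) : ℝ) with hN
    have hN0 : 0 < N := by rw [hN]; positivity
    have e : ∀ ω, |normalizedSum X (n + 1) ω| ^ q
        = |partialSum X (n + 1) ω| ^ q / N ^ (q / 2) := fun ω => by
      rw [normalizedSum, abs_div, Real.div_rpow (abs_nonneg _) (abs_nonneg _),
        abs_of_nonneg (Real.sqrt_nonneg _), Real.sqrt_eq_rpow, ← Real.rpow_mul hN0.le]
      congr 2; ring
    simp only [e]
    refine ⟨(hK n P hP).1.div_const _, ?_⟩
    rw [integral_div, div_le_iff₀ (by positivity)]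
    exact (hK n P hP).2

lemma upperExp_diff {𝒬 : Set (Measure Ω)} (h𝒬 : 𝒬.Nonempty) {f g : Ω → ℝ} {ε : ℝ}
    (hg : HasFiniteUpperExp 𝒬 g)
    (h : ∀ P ∈ 𝒬, ∫ ω, f ω ∂P ≤ ∫ ω, g ω ∂P + ε) :
    upperExp 𝒬 f ≤ upperExp 𝒬 g + ε :=
  upperExp_le h𝒬 fun P hP => (h P hP).trans (by linarith [integral_le_upperExp hg hP])

lemma tail_le (p : ℝ) (hp : 1 ≤ p) (R u : ℝ) (hR : 1 ≤ R) (hu : R ≤ u) :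
    1 + u ^ p ≤ 2 / R * u ^ (p + 1) := by
  have hu0 : 0 < u := by linarith
  have h1 : 1 ≤ u ^ p := Real.one_le_rpow (by linarith) (by linarith)
  rw [Real.rpow_add_one hu0.ne']
  have : 2 / R * (u ^ p * u) = 2 * u ^ p * (u / R) := by ring
  rw [this]
  have h2 : 1 ≤ u / R := by rw [le_div_iff₀ (by linarith)]; linarith
  nlinarith

end

/-- **Theorem 3.2.** Let `(X_i)` be IID under `E̅` with `E̅[X_1] = E̅[-X_1] = 0` and
`E̅[|X_1|^{p+1}] < ∞` for some `p ≥ 1`.  If `E̅[φ(S̄_n)]` converges for every bounded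
continuous `φ` with compact support, then `E̅[φ(S̄_n)]` converges for every continuous
`φ` satisfying the growth condition `|φ(x)| ≤ C (1 + |x|^p)` for some `C > 0`. -/
theorem clt_polynomial_growth {Ω : Type*} [MeasurableSpace Ω]
    (𝒬 : Set (Measure Ω)) (h𝒬 : 𝒬.Nonempty)
    (hprob : ∀ P ∈ 𝒬, IsProbabilityMeasure P)
    (X : ℕ → Ω → ℝ) (hmeas : ∀ i, Measurable (X i))
    (hiid : IsIIDUnder 𝒬 X)
    (p : ℝ) (hp : 1 ≤ p)
    (hmean : upperExp 𝒬 (X 0) = 0)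
    (hmean' : upperExp 𝒬 (fun ω => -X 0 ω) = 0)
    (hmom : HasFiniteUpperExp 𝒬 (fun ω => |X 0 ω| ^ (p + 1)))
    (hcs : ∀ φ : ℝ → ℝ, Continuous φ → HasCompactSupport φ →
      ∃ L : ℝ, Tendsto (fun n => upperExp 𝒬 (fun ω => φ (normalizedSum X n ω)))
        atTop (𝓝 L)) :
    ∀ φ : ℝ → ℝ, Continuous φ →
      (∃ C : ℝ, 0 < C ∧ ∀ x : ℝ, |φ x| ≤ C * (1 + |x| ^ p)) →
      (∀ n : ℕ, HasFiniteUpperExp 𝒬 (fun ω => φ (normalizedSum X n ω))) →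
      ∃ L : ℝ, Tendsto (fun n => upperExp 𝒬 (fun ω => φ (normalizedSum X n ω)))
        atTop (𝓝 L) := by
  intro φ hφ ⟨C, hC, hgrow⟩ hfin
  have hq : 2 ≤ p + 1 := by linarith
  have hM := moment_i hprob hmeas hiid h𝒬 hmom
  have hzero := integral_zero_i hprob hmeas hiid h𝒬 hq hmean hmean' hmom
  have hM0 : 0 ≤ upperExp 𝒬 (fun ω => |X 0 ω| ^ (p + 1)) := by
    obtain ⟨P, hP⟩ := h𝒬
    exact le_trans (integral_nonneg fun ω => by positivity) (hM 0 P hP).2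
  obtain ⟨K, hK0, hK⟩ := moment_bound hprob hmeas hiid h𝒬 hq hzero hM hM0
  have hn := norm_moment hq hK0 hK
  have hnm : ∀ n, Measurable (normalizedSum X n) := fun n =>
    (measurable_partialSum hmeas n).div_const _
  -- approximation by convergent sequences
  have approx : ∀ ε > 0, ∃ b : ℕ → ℝ, (∃ L, Tendsto b atTop (𝓝 L)) ∧
      ∀ n, |upperExp 𝒬 (fun ω => φ (normalizedSum X n ω)) - b n| ≤ ε := by
    intro ε hε
    set R := max 1 (2 * C * K / ε) with hR
    have hR1 : 1 ≤ R := le_max_left _ _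
    have hR2 : 2 * C * K / ε ≤ R := le_max_right _ _
    have hRε : C * (2 / R) * K ≤ ε := by
      rw [div_le_iff₀ hε] at hR2
      have : C * (2 / R) * K = 2 * C * K / R := by ring
      rw [this, div_le_iff₀ (by linarith)]
      linarith
    set χ : ℝ → ℝ := fun x => max 0 (min 1 (R + 1 - |x|)) with hχ
    have hχc : Continuous χ := by fun_prop
    have hχ0 : ∀ x, 0 ≤ χ x := fun x => le_max_left _ _
    have hχ1 : ∀ x, χ x ≤ 1 := fun x => max_le zero_le_one (min_le_left _ _)
    have hχR : ∀ x, |x| ≤ R → χ x = 1 := fun x hx => by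
      simp only [hχ]
      rw [min_eq_left (by linarith), max_eq_right zero_le_one]
    have hcomp : HasCompactSupport (fun x => φ x * χ x) := by
      apply HasCompactSupport.intro (isCompact_Icc (a := -(R + 1)) (b := R + 1))
      intro x hx
      have hx' : R + 1 < |x| := by
        by_contra hcon
        push Not at hcon
        exact hx (abs_le.mp hcon)
      have : χ x = 0 := by
        simp only [hχ]
        exact max_eq_left ((min_le_right _ _).trans (by linarith))
      rw [this, mul_zero]
    have hcont : Continuous (fun x => φ x * χ x) := hφ.mul hχc
    refine ⟨_, hcs _ hcont hcomp, ?_⟩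
    intro n
    have hdiff : ∀ x, |φ x - φ x * χ x| ≤ C * (2 / R) * |x| ^ (p + 1) := by
      intro x
      rcases le_or_gt |x| R with h | h
      · rw [hχR x h, mul_one, sub_self, abs_zero]
        have : 0 < R := by linarith
        positivity
      · have e : φ x - φ x * χ x = φ x * (1 - χ x) := by ring
        rw [e, abs_mul, abs_of_nonneg (by linarith [hχ1 x] : 0 ≤ 1 - χ x)]
        calc |φ x| * (1 - χ x) ≤ |φ x| * 1 := by
              gcongr; linarith [hχ0 x]
          _ ≤ C * (1 + |x| ^ p) := by rw [mul_one]; exact hgrow x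
          _ ≤ C * (2 / R * |x| ^ (p + 1)) := by
              gcongr; exact tail_le p hp R _ hR1 h.le
          _ = _ := by ring
    obtain ⟨B, hB⟩ := hcont.bounded_above_of_compact_support hcomp
    have ig : ∀ P ∈ 𝒬, Integrable
        (fun ω => φ (normalizedSum X n ω) * χ (normalizedSum X n ω)) P := fun P hP => by
      have := hprob P hP
      exact Integrable.of_bound (C := B)
        (hcont.measurable.comp (hnm n)).aestronglyMeasurable
        (Eventually.of_forall fun ω => hB _)
    have fg : HasFiniteUpperExp 𝒬
        (fun ω => φ (normalizedSum X n ω) * χ (normalizedSum X n ω)) :=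
      hasFinite_of (B := B) ig fun P hP => by
        have := hprob P hP
        calc _ ≤ ∫ ω, B ∂P := integral_mono (ig P hP) (integrable_const _)
              (fun ω => (le_abs_self _).trans (hB _))
          _ = B := by simp
    have key : ∀ P ∈ 𝒬, |∫ ω, φ (normalizedSum X n ω) ∂P
        - ∫ ω, φ (normalizedSum X n ω) * χ (normalizedSum X n ω) ∂P| ≤ ε := by
      intro P hP
      rw [← integral_sub ((hfin n).1 P hP) (ig P hP)]
      calc _ ≤ ∫ ω, C * (2 / R) * |normalizedSum X n ω| ^ (p + 1) ∂P := by
            rw [← Real.norm_eq_abs]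
            exact norm_integral_le_of_norm_le ((hn n P hP).1.const_mul _)
              (Eventually.of_forall fun ω => hdiff _)
        _ = C * (2 / R) * ∫ ω, |normalizedSum X n ω| ^ (p + 1) ∂P := integral_const_mul _ _
        _ ≤ C * (2 / R) * K := by
            have : 0 < R := by linarith
            gcongr
            exact (hn n P hP).2
        _ ≤ ε := hRε
    have u1 := upperExp_diff (ε := ε) h𝒬 (f := fun ω => φ (normalizedSum X n ω)) fg
      (fun P hP => by linarith [(abs_le.mp (key P hP)).2])
    have u2 := upperExp_diff (ε := ε) h𝒬
      (f := fun ω => φ (normalizedSum X n ω) * χ (normalizedSum X n ω)) (hfin n)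
      (fun P hP => by linarith [(abs_le.mp (key P hP)).1])
    rw [abs_le]
    constructor <;> linarith
  apply cauchySeq_tendsto_of_complete
  rw [Metric.cauchySeq_iff']
  intro ε hε
  obtain ⟨b, ⟨L, hL⟩, hb⟩ := approx (ε / 4) (by linarith)
  obtain ⟨N, hN⟩ := Metric.cauchySeq_iff'.mp hL.cauchySeq (ε / 4) (by linarith)
  refine ⟨N, fun n hn' => ?_⟩
  have h1 := hN n hn'
  have h2 := abs_le.mp (hb n)
  have h3 := abs_le.mp (hb N)
  rw [Real.dist_eq, abs_lt] at h1
  rw [Real.dist_eq, abs_lt]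
  constructor <;> linarith [h1.1, h1.2, h2.1, h2.2, h3.1, h3.2]
end

section
/- Let p ≥ 1 and let (Z_n)_{n≥1} be a sequence of random variables on (Ω, 𝒜) such that sup_{n≥1} E̅[|Z_n|^{p+1}] < ∞. Assume that for every bounded continuous function φ₁ : ℝ → ℝ with compact support the limit lim_{n→∞} E̅[φ₁(Z_n)] exists. Then for every continuous function φ : ℝ → ℝ satisfying |φ(x)| ≤ C(1 + |x|^p) for some C > 0, the sequence (E̅[φ(Z_n)])_{n≥1} is convergent. -/
open MeasureTheory Filter Topology

/-- One-sided comparison of upper expectations. -/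
lemma upperExp_le_add {Ω : Type*} [MeasurableSpace Ω] (𝒬 : Set (Measure Ω)) (h𝒬 : 𝒬.Nonempty)
    (X Y : Ω → ℝ) (e : ℝ) (hY : BddAbove ((fun P : Measure Ω => ∫ ω, Y ω ∂P) '' 𝒬))
    (h : ∀ P ∈ 𝒬, ∫ ω, X ω ∂P ≤ ∫ ω, Y ω ∂P + e) :
    upperExp 𝒬 X ≤ upperExp 𝒬 Y + e := by
  unfold upperExp
  apply csSup_le (h𝒬.image _)
  rintro _ ⟨P, hP, rfl⟩
  have h1 := le_csSup hY ⟨P, hP, rfl⟩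
  have h2 := h P hP
  simp only at h1 ⊢
  linarith

/-- The piecewise linear cutoff. -/
noncomputable def cutoffFn (N x : ℝ) : ℝ := max 0 (min 1 (N + 1 - |x|))

lemma cutoffFn_cont (N : ℝ) : Continuous (cutoffFn N) := by
  unfold cutoffFn; fun_prop

lemma cutoffFn_bounds (N x : ℝ) : 0 ≤ cutoffFn N x ∧ cutoffFn N x ≤ 1 := by
  unfold cutoffFn
  exact ⟨le_max_left _ _, max_le zero_le_one (min_le_left _ _)⟩

lemma cutoffFn_one (N x : ℝ) (h : |x| ≤ N) : cutoffFn N x = 1 := by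
  unfold cutoffFn
  rw [min_eq_left (by linarith), max_eq_right zero_le_one]

lemma cutoffFn_supp (N : ℝ) : HasCompactSupport (cutoffFn N) := by
  apply HasCompactSupport.intro (isCompact_Icc (a := -(N + 1)) (b := N + 1))
  intro x hx
  have h : N + 1 < |x| := by
    by_contra hc
    exact hx (abs_le.mp (not_lt.mp hc))
  unfold cutoffFn
  exact max_eq_left ((min_le_right _ _).trans (by linarith))

lemma cutoff_err (φ : ℝ → ℝ) (C p : ℝ) (hC : 0 < C) (hp : 1 ≤ p)
    (hφ : ∀ x, |φ x| ≤ C * (1 + |x| ^ p)) (N : ℝ) (hN : 1 ≤ N) (x : ℝ) :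
    |φ x - φ x * cutoffFn N x| ≤ 2 * C / N * |x| ^ (p + 1) := by
  have hN0 : 0 < N := by linarith
  by_cases h : |x| ≤ N
  · rw [cutoffFn_one N x h]
    simp only [mul_one, sub_self, abs_zero]
    positivity
  · push Not at h
    obtain ⟨h0, h1⟩ := cutoffFn_bounds N x
    have hx0 : 0 < |x| := by linarith
    have e1 : |φ x - φ x * cutoffFn N x| ≤ |φ x| := by
      rw [show φ x - φ x * cutoffFn N x = φ x * (1 - cutoffFn N x) by ring, abs_mul]
      apply mul_le_of_le_one_right (abs_nonneg _)
      rw [abs_le]; constructor <;> linarith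
    have e2 : 1 ≤ |x| ^ p := Real.one_le_rpow (by linarith) (by linarith)
    have e3 : |x| ^ (p + 1) = |x| ^ p * |x| := Real.rpow_add_one hx0.ne' p
    rw [e3, div_mul_eq_mul_div, le_div_iff₀ hN0]
    calc |φ x - φ x * cutoffFn N x| * N ≤ (C * (1 + |x| ^ p)) * N := by
          gcongr; exact e1.trans (hφ x)
      _ ≤ (C * (|x| ^ p + |x| ^ p)) * |x| := by gcongr
      _ = _ := by ring

/-- If `sup_n E̅[|Z_n|^{p+1}] < ∞` for some `p ≥ 1` and `E̅[φ₁(Z_n)]` converges for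
every bounded continuous `φ₁` with compact support, then `E̅[φ(Z_n)]` converges for
every continuous `φ` with `|φ(x)| ≤ C (1 + |x|^p)` for some `C > 0`. -/
theorem convergence_from_compact_support {Ω : Type*} [MeasurableSpace Ω]
    (𝒬 : Set (Measure Ω)) (h𝒬 : 𝒬.Nonempty)
    (hprob : ∀ P ∈ 𝒬, IsProbabilityMeasure P)
    (Z : ℕ → Ω → ℝ) (hmeas : ∀ n, Measurable (Z n))
    (p : ℝ) (hp : 1 ≤ p)
    (hmom : ∃ M : ℝ, ∀ n : ℕ, 1 ≤ n →
      HasFiniteUpperExp 𝒬 (fun ω => |Z n ω| ^ (p + 1)) ∧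
      upperExp 𝒬 (fun ω => |Z n ω| ^ (p + 1)) ≤ M)
    (hcs : ∀ φ₁ : ℝ → ℝ, Continuous φ₁ → HasCompactSupport φ₁ →
      ∃ L : ℝ, Tendsto (fun n => upperExp 𝒬 (fun ω => φ₁ (Z n ω))) atTop (𝓝 L)) :
    ∀ φ : ℝ → ℝ, Continuous φ →
      (∃ C : ℝ, 0 < C ∧ ∀ x : ℝ, |φ x| ≤ C * (1 + |x| ^ p)) →
      (∀ n : ℕ, 1 ≤ n → HasFiniteUpperExp 𝒬 (fun ω => φ (Z n ω))) →
      ∃ L : ℝ, Tendsto (fun n => upperExp 𝒬 (fun ω => φ (Z n ω))) atTop (𝓝 L) := by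
  rintro φ hφc ⟨C, hC, hφ⟩ hfin
  obtain ⟨M, hM⟩ := hmom
  -- uniform approximation
  have key : ∀ N : ℝ, 1 ≤ N → ∀ n : ℕ, 1 ≤ n →
      |upperExp 𝒬 (fun ω => φ (Z n ω)) -
        upperExp 𝒬 (fun ω => φ (Z n ω) * cutoffFn N (Z n ω))| ≤ 2 * C / N * |M| := by
    intro N hN n hn
    obtain ⟨⟨hi, hb⟩, hle⟩ := hM n hn
    obtain ⟨fi, fb⟩ := hfin n hn
    have hN0 : 0 < N := by linarith
    have hd : ∀ P ∈ 𝒬, |∫ ω, φ (Z n ω) ∂P - ∫ ω, φ (Z n ω) * cutoffFn N (Z n ω) ∂P|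
        ≤ 2 * C / N * |M| := by
      intro P hP
      have hint : Integrable (fun ω => φ (Z n ω) * cutoffFn N (Z n ω)) P := by
        refine (fi P hP).mono
          ((hφc.measurable.comp (hmeas n)).mul
            ((cutoffFn_cont N).measurable.comp (hmeas n))).aestronglyMeasurable ?_
        refine Eventually.of_forall fun ω => ?_
        obtain ⟨h0, h1⟩ := cutoffFn_bounds N (Z n ω)
        rw [norm_mul]
        apply mul_le_of_le_one_right (norm_nonneg _)
        rw [Real.norm_eq_abs, abs_of_nonneg h0]
        exact h1
      rw [← integral_sub (fi P hP) hint]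
      have h1 : ∫ ω, |Z n ω| ^ (p + 1) ∂P ≤ |M| :=
        ((le_csSup hb ⟨P, hP, rfl⟩).trans hle).trans (le_abs_self M)
      calc |∫ ω, φ (Z n ω) - φ (Z n ω) * cutoffFn N (Z n ω) ∂P|
          ≤ ∫ ω, |φ (Z n ω) - φ (Z n ω) * cutoffFn N (Z n ω)| ∂P :=
            abs_integral_le_integral_abs
        _ ≤ ∫ ω, 2 * C / N * |Z n ω| ^ (p + 1) ∂P :=
            integral_mono ((fi P hP).sub hint).abs ((hi P hP).const_mul _)
              (fun ω => cutoff_err φ C p hC hp hφ N hN (Z n ω))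
        _ = 2 * C / N * ∫ ω, |Z n ω| ^ (p + 1) ∂P := integral_const_mul _ _
        _ ≤ _ := by gcongr
    have gb : BddAbove ((fun P : Measure Ω =>
        ∫ ω, φ (Z n ω) * cutoffFn N (Z n ω) ∂P) '' 𝒬) := by
      obtain ⟨B, hB⟩ := fb
      refine ⟨B + 2 * C / N * |M|, ?_⟩
      rintro _ ⟨P, hP, rfl⟩
      have h1 : ∫ ω, φ (Z n ω) ∂P ≤ B := hB ⟨P, hP, rfl⟩
      have h2 := (abs_le.mp (hd P hP)).1
      simp only
      linarith
    have a1 := upperExp_le_add 𝒬 h𝒬 (fun ω => φ (Z n ω))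
      (fun ω => φ (Z n ω) * cutoffFn N (Z n ω)) (2 * C / N * |M|) gb
      (fun P hP => by have := (abs_le.mp (hd P hP)).2; linarith)
    have a2 := upperExp_le_add 𝒬 h𝒬 (fun ω => φ (Z n ω) * cutoffFn N (Z n ω))
      (fun ω => φ (Z n ω)) (2 * C / N * |M|) fb
      (fun P hP => by have := (abs_le.mp (hd P hP)).1; linarith)
    rw [abs_le]; constructor <;> linarith
  apply cauchySeq_tendsto_of_complete
  rw [Metric.cauchySeq_iff]
  intro ε hε
  set N : ℝ := 1 + 8 * C * |M| / ε with hNdef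
  have hN1 : 1 ≤ N := by
    have : 0 ≤ 8 * C * |M| / ε := by positivity
    linarith
  have hN0 : 0 < N := by linarith
  have hsmall : 2 * C / N * |M| ≤ ε / 4 := by
    rw [div_mul_eq_mul_div, div_le_iff₀ hN0]
    have : ε / 4 * N = ε / 4 + 2 * C * |M| := by
      rw [hNdef]; field_simp; ring
    linarith
  obtain ⟨L, hL⟩ := hcs (fun x => φ x * cutoffFn N x) (hφc.mul (cutoffFn_cont N))
    ((cutoffFn_supp N).mul_left)
  obtain ⟨K, hK⟩ := Metric.cauchySeq_iff.mp hL.cauchySeq (ε / 4) (by linarith)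
  refine ⟨max K 1, fun m hm n hn => ?_⟩
  have k1 := key N hN1 m ((le_max_right _ _).trans hm)
  have k2 := key N hN1 n ((le_max_right _ _).trans hn)
  have k3 := hK m ((le_max_left _ _).trans hm) n ((le_max_left _ _).trans hn)
  rw [Real.dist_eq, abs_lt] at k3 ⊢
  rw [abs_le] at k1 k2
  constructor <;> linarith [k1.1, k1.2, k2.1, k2.2, k3.1, k3.2]
end

section
/- Let X and Y be real random variables on (Ω, 𝒜) and suppose Y is independent of X under E̅ (Peng independence). Then X and Y are pairwise independent under both capacities V and v: for all Borel sets D, G ⊆ ℝ, V(X ∈ D, Y ∈ G) = V(X ∈ D) · V(Y ∈ G) and v(X ∈ D, Y ∈ G) = v(X ∈ D) · v(Y ∈ G). -/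
open MeasureTheory Filter Topology

/-- Upper capacity `V(A) = sup_{P ∈ 𝒬} P(A)`. -/
noncomputable def capV {Ω : Type*} [MeasurableSpace Ω]
    (𝒬 : Set (Measure Ω)) (A : Set Ω) : ℝ :=
  sSup ((fun P : Measure Ω => (P A).toReal) '' 𝒬)

/-- Lower capacity `v(A) = inf_{P ∈ 𝒬} P(A)`. -/
noncomputable def capv {Ω : Type*} [MeasurableSpace Ω]
    (𝒬 : Set (Measure Ω)) (A : Set Ω) : ℝ :=
  sInf ((fun P : Measure Ω => (P A).toReal) '' 𝒬)

open scoped Pointwise in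
theorem image_aux {Ω : Type*} [MeasurableSpace Ω] (𝒬 : Set (Measure Ω))
    (a : ℝ) {A : Set Ω} (hA : MeasurableSet A) :
    (fun P : Measure Ω => ∫ ω, a * A.indicator (fun _ => (1:ℝ)) ω ∂P) '' 𝒬
      = a • ((fun P : Measure Ω => (P A).toReal) '' 𝒬) := by
  rw [← Set.image_smul, Set.image_image]
  apply Set.image_congr
  intro P _
  rw [integral_const_mul, integral_indicator hA]
  simp [Measure.real]

theorem upperExp_nonneg_aux {Ω : Type*} [MeasurableSpace Ω] (𝒬 : Set (Measure Ω))
    {a : ℝ} (ha : 0 ≤ a) {A : Set Ω} (hA : MeasurableSet A) :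
    upperExp 𝒬 (fun ω => a * A.indicator (fun _ => (1:ℝ)) ω) = a * capV 𝒬 A := by
  unfold upperExp capV
  rw [image_aux 𝒬 a hA, Real.sSup_smul_of_nonneg ha, smul_eq_mul]

theorem upperExp_nonpos_aux {Ω : Type*} [MeasurableSpace Ω] (𝒬 : Set (Measure Ω))
    {a : ℝ} (ha : a ≤ 0) {A : Set Ω} (hA : MeasurableSet A) :
    upperExp 𝒬 (fun ω => a * A.indicator (fun _ => (1:ℝ)) ω) = a * capv 𝒬 A := by
  unfold upperExp capv
  rw [image_aux 𝒬 a hA, Real.sSup_smul_of_nonpos ha, smul_eq_mul]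

theorem finite_aux {Ω : Type*} [MeasurableSpace Ω] (𝒬 : Set (Measure Ω))
    (hprob : ∀ P ∈ 𝒬, IsProbabilityMeasure P)
    (a : ℝ) {A : Set Ω} (hA : MeasurableSet A) :
    HasFiniteUpperExp 𝒬 (fun ω => a * A.indicator (fun _ => (1:ℝ)) ω) := by
  constructor
  · intro P hP
    have := hprob P hP
    exact ((integrable_const (1:ℝ)).indicator hA).const_mul a
  · refine ⟨|a|, ?_⟩
    rintro _ ⟨P, hP, rfl⟩
    have := hprob P hP
    have h1 : P.real A ≤ 1 := measureReal_le_one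
    have h0 : 0 ≤ P.real A := measureReal_nonneg
    simp only
    rw [integral_const_mul, integral_indicator hA]
    simp only [integral_const, smul_eq_mul, mul_one, measureReal_restrict_apply_univ]
    nlinarith [le_abs_self a, abs_nonneg a]

theorem key_aux {Ω : Type*} [MeasurableSpace Ω]
    (𝒬 : Set (Measure Ω))
    (hprob : ∀ P ∈ 𝒬, IsProbabilityMeasure P)
    (X Y : Ω → ℝ) (hX : Measurable X) (hY : Measurable Y)
    (hindep : PengIndep 𝒬 (fun ω (_ : Fin 1) => X ω) Y)
    (D G : Set ℝ) (hD : MeasurableSet D) (hG : MeasurableSet G) (c r : ℝ)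
    (hr : ∀ b : ℝ, 0 ≤ b →
      upperExp 𝒬 (fun ω => (c * b) * (Y ⁻¹' G).indicator (fun _ => (1:ℝ)) ω) = (c * b) * r) :
    upperExp 𝒬 (fun ω => c * {ω | X ω ∈ D ∧ Y ω ∈ G}.indicator (fun _ => (1:ℝ)) ω) =
      upperExp 𝒬 (fun ω => (c * r) * (X ⁻¹' D).indicator (fun _ => (1:ℝ)) ω) := by
  have hA : MeasurableSet {ω | X ω ∈ D ∧ Y ω ∈ G} := (hX hD).inter (hY hG)
  have e1 : (fun ω => c * {ω | X ω ∈ D ∧ Y ω ∈ G}.indicator (fun _ => (1:ℝ)) ω) =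
      fun ω => (c * D.indicator (fun _ => (1:ℝ)) (X ω)) * G.indicator (fun _ => (1:ℝ)) (Y ω) := by
    funext ω
    by_cases h1 : X ω ∈ D <;> by_cases h2 : Y ω ∈ G <;> simp [h1, h2]
  have e2 : (fun ω => (c * r) * (X ⁻¹' D).indicator (fun _ => (1:ℝ)) ω) =
      fun ω => upperExp 𝒬 (fun ω' =>
        (c * D.indicator (fun _ => (1:ℝ)) (X ω)) * G.indicator (fun _ => (1:ℝ)) (Y ω')) := by
    funext ω
    have := hr (D.indicator (fun _ => (1:ℝ)) (X ω))
      (Set.indicator_nonneg (fun _ _ => zero_le_one) _)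
    refine Eq.trans ?_ this.symm
    by_cases h1 : X ω ∈ D <;> simp [h1]
  have f1 := finite_aux 𝒬 hprob c hA
  have f2 := finite_aux 𝒬 hprob (c * r) (hX hD)
  rw [e1] at f1 ⊢
  rw [e2] at f2 ⊢
  refine hindep (fun x y => (c * D.indicator (fun _ => (1:ℝ)) (x 0)) *
    G.indicator (fun _ => (1:ℝ)) y) ?_ f1 ?_ f2
  · have m1 : Measurable (D.indicator (fun _ => (1:ℝ))) := measurable_const.indicator hD
    have m2 : Measurable (G.indicator (fun _ => (1:ℝ))) := measurable_const.indicator hG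
    exact ((m1.comp ((measurable_pi_apply 0).comp measurable_fst)).const_mul c).mul
      (m2.comp measurable_snd)
  · intro x
    exact finite_aux 𝒬 hprob _ (hY hG)

/-- **Lemma 2.2.** If `Y` is Peng-independent of `X` under the upper expectation,
then `X` and `Y` are pairwise independent under both capacities `V` and `v`. -/
theorem peng_indep_implies_pairwise_indep {Ω : Type*} [MeasurableSpace Ω]
    (𝒬 : Set (Measure Ω)) (h𝒬 : 𝒬.Nonempty)
    (hprob : ∀ P ∈ 𝒬, IsProbabilityMeasure P)
    (X Y : Ω → ℝ) (hX : Measurable X) (hY : Measurable Y)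
    (hindep : PengIndep 𝒬 (fun ω (_ : Fin 1) => X ω) Y) :
    ∀ D G : Set ℝ, MeasurableSet D → MeasurableSet G →
      capV 𝒬 {ω | X ω ∈ D ∧ Y ω ∈ G} = capV 𝒬 (X ⁻¹' D) * capV 𝒬 (Y ⁻¹' G) ∧
      capv 𝒬 {ω | X ω ∈ D ∧ Y ω ∈ G} = capv 𝒬 (X ⁻¹' D) * capv 𝒬 (Y ⁻¹' G) := by
  intro D G hD hG
  have hA : MeasurableSet {ω | X ω ∈ D ∧ Y ω ∈ G} := (hX hD).inter (hY hG)
  constructor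
  · have hV : 0 ≤ capV 𝒬 (Y ⁻¹' G) := by
      apply Real.sSup_nonneg
      rintro _ ⟨P, _, rfl⟩
      exact ENNReal.toReal_nonneg
    have := key_aux 𝒬 hprob X Y hX hY hindep D G hD hG 1 (capV 𝒬 (Y ⁻¹' G))
      (fun b hb => upperExp_nonneg_aux 𝒬 (by linarith) (hY hG))
    rw [upperExp_nonneg_aux 𝒬 zero_le_one hA,
      upperExp_nonneg_aux 𝒬 (by linarith) (hX hD)] at this
    linarith
  · have hV : 0 ≤ capv 𝒬 (Y ⁻¹' G) := by
      apply Real.sInf_nonneg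
      rintro _ ⟨P, _, rfl⟩
      exact ENNReal.toReal_nonneg
    have := key_aux 𝒬 hprob X Y hX hY hindep D G hD hG (-1) (capv 𝒬 (Y ⁻¹' G))
      (fun b hb => upperExp_nonpos_aux 𝒬 (by linarith) (hY hG))
    rw [upperExp_nonpos_aux 𝒬 (by norm_num) hA,
      upperExp_nonpos_aux 𝒬 (by linarith) (hX hD)] at this
    linarith
end

section
/- Let (X_i)_{i≥1} be a sequence of random variables on (Ω, 𝒜) that is IID under E̅, with E̅[X₁] = E̅[−X₁] = 0 and E̅[X₁²] < ∞. Then for all m ≥ 0 and n ≥ 1, E̅[(S_{m+n} − S_m)²] ≤ n · E̅[X₁²]. -/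
open MeasureTheory Filter Topology

theorem upperExp_const_add {Ω : Type*} [MeasurableSpace Ω]
    (𝒬 : Set (Measure Ω)) (h𝒬 : 𝒬.Nonempty)
    (hprob : ∀ P ∈ 𝒬, IsProbabilityMeasure P) (c : ℝ) (Z W : Ω → ℝ)
    (hZ : HasFiniteUpperExp 𝒬 Z)
    (hW : ∀ P ∈ 𝒬, Integrable W P) (hW0 : ∀ P ∈ 𝒬, ∫ ω, W ω ∂P = 0) :
    HasFiniteUpperExp 𝒬 (fun ω => c + W ω + Z ω) ∧
    upperExp 𝒬 (fun ω => c + W ω + Z ω) = c + upperExp 𝒬 Z := by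
  have hint : ∀ P ∈ 𝒬, ∫ ω, (c + W ω + Z ω) ∂P = c + ∫ ω, Z ω ∂P := by
    intro P hP
    have := hprob P hP
    have hcW : Integrable (fun ω => c + W ω) P := (integrable_const c).add (hW P hP)
    rw [integral_add hcW (hZ.1 P hP),
      integral_add (integrable_const c) (hW P hP), hW0 P hP]
    simp
  have himg : ((fun P : Measure Ω => ∫ ω, (c + W ω + Z ω) ∂P) '' 𝒬)
      = (fun y => c + y) '' ((fun P : Measure Ω => ∫ ω, Z ω ∂P) '' 𝒬) := by
    rw [Set.image_image]
    exact Set.image_congr hint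
  refine ⟨⟨fun P hP => ?_, ?_⟩, ?_⟩
  · have := hprob P hP
    exact ((integrable_const c).add (hW P hP)).add (hZ.1 P hP)
  · rw [himg]
    exact (monotone_id.const_add c).map_bddAbove hZ.2
  · unfold upperExp
    rw [himg]
    exact ((OrderIso.addLeft c).map_csSup' (h𝒬.image _) hZ.2).symm

/-- Second–moment bound: for a centered IID sequence under the upper expectation,
`E̅[(S_{m+n} - S_m)²] ≤ n E̅[X_1²]`. -/
theorem upperExp_sq_partialSum_le {Ω : Type*} [MeasurableSpace Ω]
    (𝒬 : Set (Measure Ω)) (h𝒬 : 𝒬.Nonempty)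
    (hprob : ∀ P ∈ 𝒬, IsProbabilityMeasure P)
    (X : ℕ → Ω → ℝ) (hmeas : ∀ i, Measurable (X i))
    (hiid : IsIIDUnder 𝒬 X)
    (hmean : upperExp 𝒬 (X 0) = 0)
    (hmean' : upperExp 𝒬 (fun ω => -X 0 ω) = 0)
    (hmom : HasFiniteUpperExp 𝒬 (fun ω => X 0 ω ^ 2))
    (hfin : ∀ m n : ℕ, HasFiniteUpperExp 𝒬
      (fun ω => (partialSum X (m + n) ω - partialSum X m ω) ^ 2)) :
    ∀ m : ℕ, ∀ n : ℕ, 1 ≤ n →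
      upperExp 𝒬 (fun ω => (partialSum X (m + n) ω - partialSum X m ω) ^ 2)
        ≤ (n : ℝ) * upperExp 𝒬 (fun ω => X 0 ω ^ 2) := by
  obtain ⟨hid, hind⟩ := hiid
  have hsq : ∀ i, HasFiniteUpperExp 𝒬 (fun ω => X i ω ^ 2) := by
    intro i
    simpa [partialSum, Finset.sum_range_succ] using hfin i 1
  have hX : ∀ i, ∀ P ∈ 𝒬, Integrable (X i) P := by
    intro i P hP
    have := hprob P hP
    exact ((memLp_two_iff_integrable_sq (hmeas i).aestronglyMeasurable).2
      ((hsq i).1 P hP)).integrable (by norm_num)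
  have hbd : ∀ i, ∀ P ∈ 𝒬, |∫ ω, X i ω ∂P| ≤ 1 + upperExp 𝒬 (fun ω => X i ω ^ 2) := by
    intro i P hP
    have := hprob P hP
    have h1 : ∫ ω, X i ω ^ 2 ∂P ≤ upperExp 𝒬 (fun ω => X i ω ^ 2) :=
      le_csSup (hsq i).2 ⟨P, hP, rfl⟩
    have h2 : ∫ ω, |X i ω| ∂P ≤ ∫ ω, (1 + X i ω ^ 2) ∂P := by
      refine integral_mono (hX i P hP).abs ((integrable_const _).add ((hsq i).1 P hP)) ?_
      intro ω
      change |X i ω| ≤ 1 + X i ω ^ 2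
      rw [← sq_abs]
      nlinarith [sq_nonneg (|X i ω| - 1), abs_nonneg (X i ω)]
    rw [integral_add (integrable_const _) ((hsq i).1 P hP)] at h2
    have h3 := abs_integral_le_integral_abs (f := X i) (μ := P)
    simp at h2
    linarith
  have hF : ∀ i, HasFiniteUpperExp 𝒬 (X i) := by
    intro i
    refine ⟨hX i, 1 + upperExp 𝒬 (fun ω => X i ω ^ 2), ?_⟩
    rintro _ ⟨P, hP, rfl⟩
    exact (le_abs_self _).trans (hbd i P hP)
  have hF' : ∀ i, HasFiniteUpperExp 𝒬 (fun ω => - X i ω) := by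
    intro i
    refine ⟨fun P hP => (hX i P hP).neg, 1 + upperExp 𝒬 (fun ω => X i ω ^ 2), ?_⟩
    rintro _ ⟨P, hP, rfl⟩
    simp only [integral_neg]
    exact (neg_le_abs _).trans (hbd i P hP)
  have hzero : ∀ i, ∀ P ∈ 𝒬, ∫ ω, X i ω ∂P = 0 := by
    intro i P hP
    have h1 : ∫ ω, X i ω ∂P ≤ upperExp 𝒬 (X i) := le_csSup (hF i).2 ⟨P, hP, rfl⟩
    have h2 : ∫ ω, - X i ω ∂P ≤ upperExp 𝒬 (fun ω => - X i ω) :=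
      le_csSup (hF' i).2 ⟨P, hP, rfl⟩
    have e1 : upperExp 𝒬 (X i) = upperExp 𝒬 (X 0) :=
      hid i (fun x => x) measurable_id (hF i) (hF 0)
    have e2 := hid i (fun x => -x) measurable_neg (hF' i) (hF' 0)
    rw [integral_neg] at h2
    linarith
  have hsqeq : ∀ i, upperExp 𝒬 (fun ω => X i ω ^ 2) = upperExp 𝒬 (fun ω => X 0 ω ^ 2) :=
    fun i => hid i (fun x => x ^ 2) (by fun_prop) (hsq i) (hsq 0)
  have key : ∀ i, ∀ c : ℝ, HasFiniteUpperExp 𝒬 (fun ω => (c + X i ω) ^ 2) ∧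
      upperExp 𝒬 (fun ω => (c + X i ω) ^ 2) = c ^ 2 + upperExp 𝒬 (fun ω => X 0 ω ^ 2) := by
    intro i c
    have h := upperExp_const_add 𝒬 h𝒬 hprob (c ^ 2) (fun ω => X i ω ^ 2)
      (fun ω => 2 * c * X i ω) (hsq i) (fun P hP => (hX i P hP).const_mul _)
      (fun P hP => by rw [integral_const_mul, hzero i P hP, mul_zero])
    rw [hsqeq i] at h
    simpa only [add_sq] using h
  intro m n hn
  induction n, hn using Nat.le_induction with
  | base =>
    have : (fun ω => (partialSum X (m + 1) ω - partialSum X m ω) ^ 2)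
        = fun ω => X m ω ^ 2 := by
      funext ω
      simp [partialSum, Finset.sum_range_succ]
    rw [this, hsqeq m]
    simp
  | succ n hn ih =>
    obtain ⟨k, rfl⟩ : ∃ k, n = k + 1 := ⟨n - 1, by omega⟩
    set t : (Fin (m + k + 1) → ℝ) → ℝ := fun x =>
      ∑ j : Fin (m + k + 1), if m ≤ (j : ℕ) then x j else 0 with ht
    have htm : Measurable t := by
      refine Finset.measurable_sum _ fun j _ => ?_
      split_ifs
      · exact measurable_pi_apply j
      · exact measurable_const
    have hT : ∀ ω, t (fun j => X (j : ℕ) ω)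
        = partialSum X (m + (k + 1)) ω - partialSum X m ω := by
      intro ω
      have h1 := Finset.sum_range (n := m + k + 1) (fun j => if m ≤ j then X j ω else 0)
      have h0 : ∑ x ∈ Finset.range m, (if m ≤ x then X x ω else 0) = 0 :=
        Finset.sum_eq_zero fun x hx => if_neg (by simpa using hx)
      simp only [ht]
      rw [← h1, add_assoc, Finset.sum_range_add, h0]
      simp only [partialSum, Finset.sum_range_add]
      simp
    have hT' : ∀ ω, partialSum X (m + (k + 1 + 1)) ω - partialSum X m ω
        = t (fun j => X (j : ℕ) ω) + X (m + k + 1) ω := by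
      intro ω
      rw [hT, show m + (k + 1 + 1) = (m + (k + 1)) + 1 by ring]
      simp only [partialSum]
      rw [Finset.sum_range_succ, ← add_assoc m k 1]
      ring
    have hc := upperExp_const_add 𝒬 h𝒬 hprob (upperExp 𝒬 (fun ω => X 0 ω ^ 2))
      (fun ω => (partialSum X (m + (k + 1)) ω - partialSum X m ω) ^ 2)
      (fun _ => 0) (hfin m (k + 1)) (fun P _ => integrable_zero _ _ _) (by simp)
    have hψ : (fun ω => upperExp 𝒬 (fun ω' => (t (fun j => X (j : ℕ) ω) + X (m + k + 1) ω') ^ 2))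
        = fun ω => upperExp 𝒬 (fun ω => X 0 ω ^ 2) + 0 +
          (partialSum X (m + (k + 1)) ω - partialSum X m ω) ^ 2 := by
      funext ω
      rw [(key _ _).2, hT]
      ring
    have hfin' := hfin m (k + 1 + 1)
    simp only [hT'] at hfin' ⊢
    have hI := hind (m + k) (fun x y => (t x + y) ^ 2)
      (((htm.comp measurable_fst).add measurable_snd).pow_const 2) hfin'
      (fun x => (key _ _).1) (by rw [hψ]; exact hc.1)
    simp only at hI
    rw [hI, hψ, hc.2]
    push_cast at ih ⊢
    linarith
end

section
/- Let θ be a natural number with θ ≥ 2 and let γ ∈ (0,1]. Then for all real numbers a and b, |a + b|^{θ+γ} ≤ |a|^{θ+γ} + |b|^{θ+γ} + 2^{θ+1} (|a|^γ |b|^θ + |a|^θ |b|^γ). -/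
lemma aux_pow (x y : ℝ) (hy : 0 ≤ y) (hxy : y ≤ x) (m : ℕ) :
    (x + y) ^ (m + 1) ≤ x ^ (m + 1) + (2 ^ (m + 1) - 1) * (x ^ m * y) := by
  have hx : 0 ≤ x := hy.trans hxy
  induction m with
  | zero => norm_num
  | succ m ih =>
    have h1 := mul_le_mul_of_nonneg_right ih (add_nonneg hx hy)
    have hD : (0 : ℝ) ≤ 2 ^ (m + 1) - 1 := sub_nonneg.2 (one_le_pow₀ (by norm_num))
    have h2 : (2 ^ (m + 1) - 1) * (x ^ m * y) * y ≤ (2 ^ (m + 1) - 1) * (x ^ m * y) * x :=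
      mul_le_mul_of_nonneg_left hxy (by positivity)
    calc (x + y) ^ (m + 1 + 1) = (x + y) ^ (m + 1) * (x + y) := pow_succ _ _
      _ ≤ _ := h1
      _ = x ^ (m + 1) * (x + y) + (2 ^ (m + 1) - 1) * (x ^ m * y) * x
          + (2 ^ (m + 1) - 1) * (x ^ m * y) * y := by ring
      _ ≤ x ^ (m + 1) * (x + y) + (2 ^ (m + 1) - 1) * (x ^ m * y) * x
          + (2 ^ (m + 1) - 1) * (x ^ m * y) * x := by linarith
      _ = _ := by ring

lemma aux_main (m : ℕ) (γ : ℝ) (hγ0 : 0 < γ) (hγ1 : γ ≤ 1)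
    (x y : ℝ) (hy : 0 ≤ y) (hxy : y ≤ x) :
    (x + y) ^ (m + 1) * (x + y) ^ γ ≤
      x ^ (m + 1) * x ^ γ + 2 ^ (m + 1 + 1) * (x ^ (m + 1) * y ^ γ) := by
  have hx : 0 ≤ x := hy.trans hxy
  have hsub : (x + y) ^ γ ≤ x ^ γ + y ^ γ := Real.rpow_add_le_add_rpow hx hy hγ0.le hγ1
  have hsplit : ∀ z : ℝ, 0 ≤ z → z = z ^ γ * z ^ (1 - γ) := by
    intro z hz
    rw [← Real.rpow_add_of_nonneg hz hγ0.le (by linarith)]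
    simp
  have hX : 0 ≤ x ^ γ := Real.rpow_nonneg hx _
  have hY : 0 ≤ y ^ γ := Real.rpow_nonneg hy _
  have key : x ^ γ * y ≤ x * y ^ γ := by
    have h := Real.rpow_le_rpow hy hxy (by linarith : (0 : ℝ) ≤ 1 - γ)
    calc x ^ γ * y = x ^ γ * y ^ γ * y ^ (1 - γ) := by
          rw [mul_assoc, ← hsplit y hy]
      _ ≤ x ^ γ * y ^ γ * x ^ (1 - γ) := mul_le_mul_of_nonneg_left h (by positivity)
      _ = (x ^ γ * x ^ (1 - γ)) * y ^ γ := by ring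
      _ = x * y ^ γ := by rw [← hsplit x hx]
  have key2 : y * y ^ γ ≤ x * y ^ γ := mul_le_mul_of_nonneg_right hxy hY
  have hD : (0 : ℝ) ≤ 2 ^ (m + 1) - 1 := sub_nonneg.2 (one_le_pow₀ (by norm_num))
  have hE : 0 ≤ (2 ^ (m + 1) - 1) * x ^ m := by positivity
  calc (x + y) ^ (m + 1) * (x + y) ^ γ
      ≤ (x ^ (m + 1) + (2 ^ (m + 1) - 1) * (x ^ m * y)) * (x ^ γ + y ^ γ) :=
        mul_le_mul (aux_pow x y hy hxy m) hsub (by positivity) (by positivity)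
    _ = x ^ (m + 1) * x ^ γ + x ^ (m + 1) * y ^ γ
        + (2 ^ (m + 1) - 1) * x ^ m * (x ^ γ * y + y * y ^ γ) := by ring
    _ ≤ x ^ (m + 1) * x ^ γ + x ^ (m + 1) * y ^ γ
        + (2 ^ (m + 1) - 1) * x ^ m * (x * y ^ γ + x * y ^ γ) := by gcongr
    _ = x ^ (m + 1) * x ^ γ + (2 ^ (m + 1 + 1) - 1) * (x ^ (m + 1) * y ^ γ) := by ring
    _ ≤ _ := by
      have : 0 ≤ x ^ (m + 1) * y ^ γ := by positivity
      linarith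

/-- Elementary inequality (*): for a natural number `θ ≥ 2` and `γ ∈ (0,1]`,
`|a + b|^{θ+γ} ≤ |a|^{θ+γ} + |b|^{θ+γ} + 2^{θ+1}(|a|^γ |b|^θ + |a|^θ |b|^γ)`. -/
theorem abs_add_rpow_le (θ : ℕ) (hθ : 2 ≤ θ) (γ : ℝ) (hγ0 : 0 < γ) (hγ1 : γ ≤ 1)
    (a b : ℝ) :
    |a + b| ^ ((θ : ℝ) + γ) ≤
      |a| ^ ((θ : ℝ) + γ) + |b| ^ ((θ : ℝ) + γ) +
        (2 : ℝ) ^ (θ + 1) *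
          (|a| ^ γ * |b| ^ (θ : ℝ) + |a| ^ (θ : ℝ) * |b| ^ γ) := by
  obtain ⟨m, rfl⟩ : ∃ m, θ = m + 1 := ⟨θ - 1, by omega⟩
  have hs : ∀ z : ℝ, 0 ≤ z → z ^ (((m + 1 : ℕ) : ℝ) + γ) = z ^ (m + 1) * z ^ γ := by
    intro z hz
    rw [Real.rpow_add_of_nonneg hz (Nat.cast_nonneg _) hγ0.le, Real.rpow_natCast]
  have h0 : |a + b| ^ (((m + 1 : ℕ) : ℝ) + γ) ≤ (|a| + |b|) ^ (((m + 1 : ℕ) : ℝ) + γ) :=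
    Real.rpow_le_rpow (abs_nonneg _) (abs_add_le a b) (by positivity)
  refine h0.trans ?_
  have ha := abs_nonneg a
  have hb := abs_nonneg b
  rw [hs _ (by positivity), hs _ ha, hs _ hb, Real.rpow_natCast, Real.rpow_natCast]
  generalize |a| = x at *
  generalize |b| = y at *
  have hP : 0 ≤ x ^ (m + 1) * x ^ γ := by positivity
  have hQ : 0 ≤ y ^ (m + 1) * y ^ γ := by positivity
  have hR : 0 ≤ (2 : ℝ) ^ (m + 1 + 1) * (x ^ γ * y ^ (m + 1)) := by positivity
  have hS : 0 ≤ (2 : ℝ) ^ (m + 1 + 1) * (x ^ (m + 1) * y ^ γ) := by positivity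
  rcases le_total y x with h | h
  · have := aux_main m γ hγ0 hγ1 x y hb h
    linarith
  · have := aux_main m γ hγ0 hγ1 y x ha h
    rw [add_comm y x, mul_comm (y ^ (m + 1)) (x ^ γ)] at this
    linarith
end

section
/- Let r > 2, write r = θ + γ with θ a natural number, θ ≥ 2, and γ ∈ (0,1], and let C > 0. Let (a_n)_{n≥1} be a sequence of nonnegative real numbers satisfying a_{2n} ≤ 2 a_n + C · a_n^{1−γ} · n^{γ r / 2} for all n ≥ 1. Then there exists a constant C' > 0 such that a_{2^k} ≤ C' · 2^{k r / 2} for all integers k ≥ 0. -/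
/-- If a nonnegative sequence satisfies the recursion
`a_{2n} ≤ 2 a_n + C a_n^{1-γ} n^{γ r / 2}` (where `r = θ + γ > 2`, `θ ∈ ℕ`, `θ ≥ 2`,
`γ ∈ (0,1]`, `C > 0`), then `a_{2^k} ≤ C' 2^{k r / 2}` for some constant `C' > 0`. -/
theorem dyadic_bound_of_recursion (r γ C : ℝ) (θ : ℕ) (hθ : 2 ≤ θ)
    (hγ0 : 0 < γ) (hγ1 : γ ≤ 1) (hr : 2 < r) (hrθγ : r = (θ : ℝ) + γ) (hC : 0 < C)
    (a : ℕ → ℝ) (ha0 : ∀ n : ℕ, 1 ≤ n → 0 ≤ a n)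
    (hrec : ∀ n : ℕ, 1 ≤ n →
      a (2 * n) ≤ 2 * a n + C * a n ^ (1 - γ) * (n : ℝ) ^ (γ * r / 2)) :
    ∃ C' : ℝ, 0 < C' ∧ ∀ k : ℕ, a (2 ^ k) ≤ C' * (2 : ℝ) ^ ((k : ℝ) * r / 2) := by
  have hq : (2 : ℝ) < (2 : ℝ) ^ (r / 2) := by
    have h := Real.rpow_lt_rpow_of_exponent_lt (x := 2) (y := 1) (z := r / 2)
      (by norm_num) (by linarith)
    simpa using h
  set q : ℝ := (2 : ℝ) ^ (r / 2) with hqdef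
  have hD : 0 < C / (q - 2) := div_pos hC (by linarith)
  set M : ℝ := max (a 1) ((C / (q - 2)) ^ (1 / γ)) with hM
  have hMpos : 0 < M := lt_of_lt_of_le (Real.rpow_pos_of_pos hD _) (le_max_right _ _)
  have hMγ : C / (q - 2) ≤ M ^ γ := by
    have h := Real.rpow_le_rpow (Real.rpow_pos_of_pos hD (1 / γ)).le
      (le_max_right (a 1) ((C / (q - 2)) ^ (1 / γ))) hγ0.le
    rwa [← Real.rpow_mul hD.le, one_div_mul_cancel hγ0.ne', Real.rpow_one] at h
  have hsplit : ∀ y : ℝ, 0 < y → y ^ (1 - γ) * y ^ γ = y := by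
    intro y hy
    rw [← Real.rpow_add hy]
    simp
  have hCM : C * M ^ (1 - γ) ≤ (q - 2) * M := by
    rw [div_le_iff₀ (by linarith)] at hMγ
    have h := mul_le_mul_of_nonneg_right hMγ (Real.rpow_pos_of_pos hMpos (1 - γ)).le
    have h2 := hsplit M hMpos
    calc C * M ^ (1 - γ) ≤ M ^ γ * (q - 2) * M ^ (1 - γ) := h
      _ = (q - 2) * (M ^ (1 - γ) * M ^ γ) := by ring
      _ = (q - 2) * M := by rw [h2]
  refine ⟨M, hMpos, ?_⟩
  intro k
  induction k with
  | zero => simp [hM]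
  | succ k ih =>
    have h1 : 1 ≤ 2 ^ k := Nat.one_le_two_pow
    have hr1 := hrec (2 ^ k) h1
    have hnn := ha0 (2 ^ k) h1
    set x : ℝ := (2 : ℝ) ^ ((k : ℝ) * r / 2) with hx
    have hxpos : 0 < x := Real.rpow_pos_of_pos (by norm_num) _
    have hxs : (2 : ℝ) ^ (((k + 1 : ℕ) : ℝ) * r / 2) = q * x := by
      rw [hqdef, hx, ← Real.rpow_add (by norm_num)]
      congr 1
      push_cast
      ring
    have hxγ : (((2 ^ k : ℕ) : ℝ)) ^ (γ * r / 2) = x ^ γ := by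
      rw [hx, ← Real.rpow_mul (by norm_num)]
      push_cast
      rw [← Real.rpow_natCast, ← Real.rpow_mul (by norm_num)]
      congr 1
      ring
    have hpow : a (2 ^ k) ^ (1 - γ) ≤ M ^ (1 - γ) * x ^ (1 - γ) := by
      rw [← Real.mul_rpow hMpos.le hxpos.le]
      exact Real.rpow_le_rpow hnn ih (by linarith)
    rw [hxγ] at hr1
    rw [hxs, pow_succ, mul_comm (2 ^ k) 2]
    have hxγpos := Real.rpow_pos_of_pos hxpos γ
    calc a (2 * 2 ^ k) ≤ 2 * a (2 ^ k) + C * a (2 ^ k) ^ (1 - γ) * x ^ γ := hr1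
      _ ≤ 2 * (M * x) + C * (M ^ (1 - γ) * x ^ (1 - γ)) * x ^ γ := by gcongr
      _ = 2 * (M * x) + C * M ^ (1 - γ) * (x ^ (1 - γ) * x ^ γ) := by ring
      _ = 2 * (M * x) + C * M ^ (1 - γ) * x := by rw [hsplit x hxpos]
      _ ≤ 2 * (M * x) + (q - 2) * M * x := by gcongr
      _ = M * (q * x) := by ring
end

section
/- Let θ be a natural number with θ ≥ 2, let γ ∈ (0,1), set r = θ + γ, and let X, Y be random variables on (Ω, 𝒜) with E̅[|X| · |Y|^{θ−1+γ}], E̅[|Y|^{(θ−γ(θ−1+γ))/(1−γ)}] and E̅[|Y|^r] finite. If a ≥ 0 is any real number with E̅[|Y|^{(θ−γ(θ−1+γ))/(1−γ)}] ≤ a, then E̅[|X|^γ · |Y|^θ] ≤ a^{1−γ} · (E̅[|X| · |Y|^{θ−1+γ}])^γ. -/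
open MeasureTheory Filter Topology

lemma holder_aux {Ω : Type*} [MeasurableSpace Ω] (P : Measure Ω) (F G : Ω → ℝ)
    (hF : ∀ ω, 0 ≤ F ω) (hG : ∀ ω, 0 ≤ G ω) (hFi : Integrable F P) (hGi : Integrable G P)
    (γ : ℝ) (h0 : 0 < γ) (h1 : γ < 1) :
    ∫ ω, F ω ^ γ * G ω ^ (1 - γ) ∂P ≤ (∫ ω, F ω ∂P) ^ γ * (∫ ω, G ω ∂P) ^ (1 - γ) := by
  have key : ∀ (H : Ω → ℝ) (c : ℝ), 0 < c → (∀ ω, 0 ≤ H ω) → Integrable H P →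
      (∀ ω, (H ω ^ c) ^ (1 / c) = H ω) ∧
      MemLp (fun ω => H ω ^ c) (ENNReal.ofReal (1 / c)) P := by
    intro H c hc hH hHi
    have e : ∀ ω, (H ω ^ c) ^ (1 / c) = H ω := by
      intro ω
      rw [← Real.rpow_mul (hH ω), mul_one_div_cancel hc.ne', Real.rpow_one]
    refine ⟨e, ?_⟩
    have hm : AEStronglyMeasurable (fun ω => H ω ^ c) P :=
      (hHi.1.aemeasurable.pow_const c).aestronglyMeasurable
    have hpos : 0 < 1 / c := by positivity
    rw [← integrable_norm_rpow_iff hm (by simpa using hpos) ENNReal.ofReal_ne_top]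
    rw [ENNReal.toReal_ofReal hpos.le]
    refine hHi.congr (Eventually.of_forall fun ω => ?_)
    simp only [Real.norm_eq_abs]
    rw [abs_of_nonneg (Real.rpow_nonneg (hH ω) _), e]
  have h1' : 0 < 1 - γ := by linarith
  obtain ⟨eF, mF⟩ := key F γ h0 hF hFi
  obtain ⟨eG, mG⟩ := key G (1 - γ) h1' hG hGi
  have hpq : (1 / γ).HolderConjugate (1 / (1 - γ)) := by
    rw [Real.holderConjugate_iff]
    refine ⟨by rw [lt_div_iff₀ h0]; linarith, by simp⟩
  have := integral_mul_le_Lp_mul_Lq_of_nonneg hpq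
    (Eventually.of_forall fun ω => Real.rpow_nonneg (hF ω) γ)
    (Eventually.of_forall fun ω => Real.rpow_nonneg (hG ω) (1 - γ)) mF mG
  simpa only [eF, eG, one_div_one_div] using this

/-- Inequality (6) of Theorem 3.1: with `r = θ + γ`, `θ ∈ ℕ`, `θ ≥ 2`, `γ ∈ (0,1)`,
if `E̅[|Y|^{(θ - γ(θ-1+γ))/(1-γ)}] ≤ a` then
`E̅[|X|^γ |Y|^θ] ≤ a^{1-γ} (E̅[|X| |Y|^{θ-1+γ}])^γ`. -/
theorem upperExp_mixed_moment_bound {Ω : Type*} [MeasurableSpace Ω]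
    (𝒬 : Set (Measure Ω)) (h𝒬 : 𝒬.Nonempty)
    (hprob : ∀ P ∈ 𝒬, IsProbabilityMeasure P)
    (θ : ℕ) (hθ : 2 ≤ θ) (γ : ℝ) (hγ0 : 0 < γ) (hγ1 : γ < 1)
    (r : ℝ) (hrθγ : r = (θ : ℝ) + γ)
    (X Y : Ω → ℝ) (hX : Measurable X) (hY : Measurable Y)
    (hfin₁ : HasFiniteUpperExp 𝒬 (fun ω => |X ω| * |Y ω| ^ ((θ : ℝ) - 1 + γ)))
    (hfin₂ : HasFiniteUpperExp 𝒬
      (fun ω => |Y ω| ^ (((θ : ℝ) - γ * ((θ : ℝ) - 1 + γ)) / (1 - γ))))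
    (hfin₃ : HasFiniteUpperExp 𝒬 (fun ω => |Y ω| ^ r))
    (hfin₄ : HasFiniteUpperExp 𝒬 (fun ω => |X ω| ^ γ * |Y ω| ^ (θ : ℝ)))
    (a : ℝ) (ha0 : 0 ≤ a)
    (ha : upperExp 𝒬
      (fun ω => |Y ω| ^ (((θ : ℝ) - γ * ((θ : ℝ) - 1 + γ)) / (1 - γ))) ≤ a) :
    upperExp 𝒬 (fun ω => |X ω| ^ γ * |Y ω| ^ (θ : ℝ)) ≤
      a ^ (1 - γ) *
        (upperExp 𝒬 (fun ω => |X ω| * |Y ω| ^ ((θ : ℝ) - 1 + γ))) ^ γ := by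
  unfold upperExp at *
  have h1' : 0 < 1 - γ := by linarith
  have hθ' : (2 : ℝ) ≤ θ := by exact_mod_cast hθ
  apply csSup_le (h𝒬.image _)
  rintro _ ⟨P, hP, rfl⟩
  have hF : ∀ ω, 0 ≤ |X ω| * |Y ω| ^ ((θ : ℝ) - 1 + γ) := fun ω => by positivity
  have hG : ∀ ω, 0 ≤ |Y ω| ^ (((θ : ℝ) - γ * ((θ : ℝ) - 1 + γ)) / (1 - γ)) :=
    fun ω => by positivity
  have hH := holder_aux P _ _ hF hG (hfin₁.1 P hP) (hfin₂.1 P hP) γ hγ0 hγ1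
  have e : ∀ ω, (|X ω| * |Y ω| ^ ((θ : ℝ) - 1 + γ)) ^ γ *
      (|Y ω| ^ (((θ : ℝ) - γ * ((θ : ℝ) - 1 + γ)) / (1 - γ))) ^ (1 - γ) =
      |X ω| ^ γ * |Y ω| ^ (θ : ℝ) := by
    intro ω
    rw [Real.mul_rpow (abs_nonneg _) (by positivity), ← Real.rpow_mul (abs_nonneg _),
      ← Real.rpow_mul (abs_nonneg _), div_mul_cancel₀ _ h1'.ne', mul_assoc,
      ← Real.rpow_add_of_nonneg (abs_nonneg _)]
    · congr 2; ring
    · apply mul_nonneg <;> linarith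
    · nlinarith
  simp only [e] at hH
  refine hH.trans ?_
  rw [mul_comm]
  have b1 := le_csSup hfin₁.2 (Set.mem_image_of_mem _ hP)
  have b2 := (le_csSup hfin₂.2 (Set.mem_image_of_mem _ hP)).trans ha
  have p1 := integral_nonneg_of_ae (μ := P) (Eventually.of_forall hF)
  have p2 := integral_nonneg_of_ae (μ := P) (Eventually.of_forall hG)
  exact mul_le_mul (Real.rpow_le_rpow p2 b2 h1'.le) (Real.rpow_le_rpow p1 b1 hγ0.le)
    (Real.rpow_nonneg p1 _) (Real.rpow_nonneg ha0 _)
end
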